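/- (Uniqueness of extension.) Let (X, 𝒳) be a stable measurable space and ℰ a stable collection generating 𝒳 (i.e. Σ(ℰ) = 𝒳) which is closed under finite conditional intersections. Let μ, ν be two stable measures on (X, 𝒳) such that μ(V|A) = ν(V|A) for all V|A ∈ ℰ, and suppose there exists a sequence (Z_k|C_k) in ℰ with ⊔_k Z_k|C_k = X and μ(Z_k|C_k) = ν(Z_k|C_k) < ∞ a.s. for all k. Then μ = ν. -/

import Mathlib

/-!
Common framework for conditional set theory and conditional measure theory
in the sense of Drapeau–Jamneshan–Karliczek–Kupper, specialized to the
measure algebra associated to a probability space `(Ω, F, P)`.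

Functions on `Ω` are identified when they agree `P`-a.s., and measurable sets
are identified when their symmetric difference is a null set.  Conditional
subsets of a stable set `X` are represented by raw pairs `(V, A)` consisting of
a set of functions and a (measurable) base set; all notions are formulated with
respect to the almost-sure identifications via the relations `cle` and `ceq`.
-/

open MeasureTheory Filter Set Topology
open scoped ENNReal

noncomputable section

namespace CondMT

variable {Ω E F' : Type*}

/-- A countable partition of `Ω` into measurable sets (modulo `P`-null sets). -/
structure Partition {Ω : Type*} (mΩ : MeasurableSpace Ω) (P : @Measure Ω mΩ) where
  part : ℕ → Set Ω
  meas : ∀ k, MeasurableSet[mΩ] (part k)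
  disj : ∀ i j, i ≠ j → P (part i ∩ part j) = 0
  cover : P ((⋃ k, part k)ᶜ) = 0

variable {mΩ : MeasurableSpace Ω}

open Classical in
/-- The concatenation `∑ x_k|A_k` of a sequence of functions along a partition:
the (a.s. unique) function equal to `x_k` on `A_k` for every `k`. -/
def Partition.concat {P : @Measure Ω mΩ} (A : Partition mΩ P) (x : ℕ → Ω → E) : Ω → E :=
  fun ω => if h : ∃ k, ω ∈ A.part k then x (Nat.find h) ω else x 0 ω

/-- A stable set of functions on `Ω`: nonempty, closed under a.s. modification and
closed under countable concatenations along partitions. -/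
def Stable (P : @Measure Ω mΩ) (X : Set (Ω → E)) : Prop :=
  X.Nonempty ∧ (∀ x ∈ X, ∀ y, x =ᵐ[P] y → y ∈ X) ∧
    ∀ (A : Partition mΩ P) (x : ℕ → Ω → E), (∀ k, x k ∈ X) → A.concat x ∈ X

/-- Raw data of a conditional subset `V|A`: the carrier `V` and the base set `A`. -/
abbrev CondRaw (Ω E : Type*) := Set (Ω → E) × Set Ω

/-- `S` represents a conditional subset of the stable set `X`: the carrier is a
stable subset of `X` and the base is measurable. -/
def IsCond (P : @Measure Ω mΩ) (X : Set (Ω → E)) (S : CondRaw Ω E) : Prop :=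
  Stable P S.1 ∧ S.1 ⊆ X ∧ MeasurableSet[mΩ] S.2

/-- Conditional inclusion `V|A ⊑ W|B`: `A ⊆ B` a.s., and every `x|A`, `x ∈ V`,
coincides a.s. on `A` with some `y|A`, `y ∈ W`. -/
def cle (P : @Measure Ω mΩ) (S T : CondRaw Ω E) : Prop :=
  P (S.2 \ T.2) = 0 ∧ ∀ x ∈ S.1, ∃ y ∈ T.1, ∀ᵐ ω ∂P, ω ∈ S.2 → x ω = y ω

/-- Identification of conditional subsets (equality in the conditional power set). -/
def ceq (P : @Measure Ω mΩ) (S T : CondRaw Ω E) : Prop := cle P S T ∧ cle P T S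

/-- `x|C ∈ V|C`: the restriction of `x` to `C` agrees a.s. on `C` with an element of `V`. -/
def memOn (P : @Measure Ω mΩ) (C : Set Ω) (x : Ω → E) (V : Set (Ω → E)) : Prop :=
  ∃ y ∈ V, ∀ᵐ ω ∂P, ω ∈ C → x ω = y ω

/-- `∑ V_k|A_k`, the set of concatenations of sequences taken from the `V_k`. -/
def concatSet (P : @Measure Ω mΩ) (A : Partition mΩ P) (V : ℕ → Set (Ω → E)) :
    Set (Ω → E) :=
  {f | ∃ x : ℕ → Ω → E, (∀ k, x k ∈ V k) ∧ f =ᵐ[P] A.concat x}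

/-- Countable concatenation `∑ (V_k|B_k)|A_k := (∑ V_k|A_k)|⋃ (A_k ∩ B_k)` in the
conditional power set. -/
def condConcat (P : @Measure Ω mΩ) (A : Partition mΩ P) (S : ℕ → CondRaw Ω E) :
    CondRaw Ω E :=
  (concatSet P A fun k => (S k).1, ⋃ k, A.part k ∩ (S k).2)

/-- Restriction `(V|A)|B := V|(A ∩ B)`. -/
def crestrict (S : CondRaw Ω E) (B : Set Ω) : CondRaw Ω E := (S.1, S.2 ∩ B)

/-- The degenerate conditional subset `X|∅ = {∗}`, the least element of `P(X)`. -/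
def cbot (X : Set (Ω → E)) : CondRaw Ω E := (X, (∅ : Set Ω))

/-- The greatest element `X = X|Ω` of `P(X)`. -/
def ctop (X : Set (Ω → E)) : CondRaw Ω E := (X, (univ : Set Ω))

/-- `a` is a supremum (conditional union) of the family `s` in `(P(X), ⊑)`. -/
def IsSupOf (P : @Measure Ω mΩ) (X : Set (Ω → E)) (s : Set (CondRaw Ω E))
    (a : CondRaw Ω E) : Prop :=
  IsCond P X a ∧ (∀ b ∈ s, cle P b a) ∧
    ∀ c, IsCond P X c → (∀ b ∈ s, cle P b c) → cle P a c

/-- `a` is an infimum (conditional intersection) of the family `s` in `(P(X), ⊑)`. -/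
def IsInfOf (P : @Measure Ω mΩ) (X : Set (Ω → E)) (s : Set (CondRaw Ω E))
    (a : CondRaw Ω E) : Prop :=
  IsCond P X a ∧ (∀ b ∈ s, cle P a b) ∧
    ∀ c, IsCond P X c → (∀ b ∈ s, cle P c b) → cle P c a

open Classical in
/-- The conditional union (supremum) of a family of conditional subsets. -/
def cSup (P : @Measure Ω mΩ) (X : Set (Ω → E)) (s : Set (CondRaw Ω E)) : CondRaw Ω E :=
  if h : ∃ a, IsSupOf P X s a then h.choose else ctop X

open Classical in
/-- The conditional intersection (infimum) of a family of conditional subsets. -/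
def cInf (P : @Measure Ω mΩ) (X : Set (Ω → E)) (s : Set (CondRaw Ω E)) : CondRaw Ω E :=
  if h : ∃ a, IsInfOf P X s a then h.choose else ctop X

/-- Binary conditional union. -/
def cSup₂ (P : @Measure Ω mΩ) (X : Set (Ω → E)) (a b : CondRaw Ω E) : CondRaw Ω E :=
  cSup P X {a, b}

/-- Binary conditional intersection. -/
def cInf₂ (P : @Measure Ω mΩ) (X : Set (Ω → E)) (a b : CondRaw Ω E) : CondRaw Ω E :=
  cInf P X {a, b}

/-- Conditional union of an indexed family. -/
def cSupFam (P : @Measure Ω mΩ) (X : Set (Ω → E)) {ι : Sort*}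
    (S : ι → CondRaw Ω E) : CondRaw Ω E :=
  cSup P X (range S)

/-- Conditional intersection of an indexed family. -/
def cInfFam (P : @Measure Ω mΩ) (X : Set (Ω → E)) {ι : Sort*}
    (S : ι → CondRaw Ω E) : CondRaw Ω E :=
  cInf P X (range S)

/-- Disjointness of conditional subsets: `V|A ⊓ W|B = {∗}`. -/
def cdisjoint (P : @Measure Ω mΩ) (X : Set (Ω → E)) (a b : CondRaw Ω E) : Prop :=
  ceq P (cInf₂ P X a b) (cbot X)

/-- The conditional complement `(V|A)^⊏ := ⊔ {W|B : W|B ⊓ V|A = {∗}}`. -/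
def ccompl (P : @Measure Ω mΩ) (X : Set (Ω → E)) (a : CondRaw Ω E) : CondRaw Ω E :=
  cSup P X {b | IsCond P X b ∧ cdisjoint P X b a}

open Classical in
/-- The largest measurable set (mod null sets) satisfying a property `Φ`,
obtained by an exhaustion argument; junk value `∅` if there is none. -/
def largestSet (P : @Measure Ω mΩ) (Φ : Set Ω → Prop) : Set Ω :=
  if h : ∃ C, MeasurableSet[mΩ] C ∧ Φ C ∧
      ∀ C', MeasurableSet[mΩ] C' → Φ C' → P (C' \ C) = 0
  then h.choose else ∅

open Classical in
/-- The smallest measurable set (mod null sets) satisfying a property `Φ`. -/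
def smallestSet (P : @Measure Ω mΩ) (Φ : Set Ω → Prop) : Set Ω :=
  if h : ∃ C, MeasurableSet[mΩ] C ∧ Φ C ∧
      ∀ C', MeasurableSet[mΩ] C' → Φ C' → P (C \ C') = 0
  then h.choose else univ

/-- Essential infimum `inf_i A_i` of a family of measurable sets in the measure algebra. -/
def essInfFam (P : @Measure Ω mΩ) {ι : Sort*} (A : ι → Set Ω) : Set Ω :=
  largestSet P fun C => ∀ i, P (C \ A i) = 0

/-- Essential supremum `sup_i A_i` of a family of measurable sets in the measure algebra. -/
def essSupFam (P : @Measure Ω mΩ) {ι : Sort*} (A : ι → Set Ω) : Set Ω :=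
  smallestSet P fun C => ∀ i, P (A i \ C) = 0

/-- A stable collection: a nonempty, `ceq`-saturated family of conditional subsets of `X`
closed under countable concatenations. -/
def IsStableColl (P : @Measure Ω mΩ) (X : Set (Ω → E)) (𝒞 : Set (CondRaw Ω E)) : Prop :=
  𝒞.Nonempty ∧ (∀ S ∈ 𝒞, IsCond P X S) ∧
    (∀ S ∈ 𝒞, ∀ T, IsCond P X T → ceq P S T → T ∈ 𝒞) ∧
    ∀ (A : Partition mΩ P) (S : ℕ → CondRaw Ω E), (∀ k, S k ∈ 𝒞) → condConcat P A S ∈ 𝒞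

/-- A stable σ-algebra on `X`. -/
def IsStableSigma (P : @Measure Ω mΩ) (X : Set (Ω → E)) (𝒳 : Set (CondRaw Ω E)) : Prop :=
  IsStableColl P X 𝒳 ∧ ctop X ∈ 𝒳 ∧ (∀ S ∈ 𝒳, ccompl P X S ∈ 𝒳) ∧
    ∀ S : ℕ → CondRaw Ω E, (∀ k, S k ∈ 𝒳) → cSupFam P X S ∈ 𝒳

/-- A stable Dynkin system on `X`. -/
def IsStableDynkin (P : @Measure Ω mΩ) (X : Set (Ω → E)) (𝒟 : Set (CondRaw Ω E)) : Prop :=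
  IsStableColl P X 𝒟 ∧ ctop X ∈ 𝒟 ∧ (∀ S ∈ 𝒟, ccompl P X S ∈ 𝒟) ∧
    ∀ S : ℕ → CondRaw Ω E, (∀ k, S k ∈ 𝒟) →
      (∀ i j, i ≠ j → cdisjoint P X (S i) (S j)) → cSupFam P X S ∈ 𝒟

/-- A stable ring on `X`. -/
def IsStableRing (P : @Measure Ω mΩ) (X : Set (Ω → E)) (𝒳 : Set (CondRaw Ω E)) : Prop :=
  IsStableColl P X 𝒳 ∧
    ∀ S ∈ 𝒳, ∀ T ∈ 𝒳, cInf₂ P X S (ccompl P X T) ∈ 𝒳 ∧ cSup₂ P X S T ∈ 𝒳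

/-- The stable σ-algebra generated by a collection `ℰ`. -/
def sigmaGen (P : @Measure Ω mΩ) (X : Set (Ω → E)) (ℰ : Set (CondRaw Ω E)) :
    Set (CondRaw Ω E) :=
  ⋂₀ {𝒳 | IsStableSigma P X 𝒳 ∧ ℰ ⊆ 𝒳}

/-- The stable Dynkin system generated by a collection `ℰ`. -/
def dynkinGen (P : @Measure Ω mΩ) (X : Set (Ω → E)) (ℰ : Set (CondRaw Ω E)) :
    Set (CondRaw Ω E) :=
  ⋂₀ {𝒟 | IsStableDynkin P X 𝒟 ∧ ℰ ⊆ 𝒟}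

/-! ### Stable set functions and stable measures -/

/-- A stable set function `μ : 𝒞 → L̄⁰₊` (represented by measurable representatives,
well defined modulo identification, and commuting with countable concatenations). -/
def IsStableSetFun (P : @Measure Ω mΩ) (𝒞 : Set (CondRaw Ω E))
    (μ : CondRaw Ω E → Ω → ℝ≥0∞) : Prop :=
  (∀ S ∈ 𝒞, Measurable[mΩ] (μ S)) ∧
    (∀ S ∈ 𝒞, ∀ T ∈ 𝒞, ceq P S T → μ S =ᵐ[P] μ T) ∧
    ∀ (A : Partition mΩ P) (S : ℕ → CondRaw Ω E), (∀ k, S k ∈ 𝒞) →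
      μ (condConcat P A S) =ᵐ[P] A.concat fun k => μ (S k)

/-- Property (M1): `μ(V|A) = μ(V|A)|A + 0|Aᶜ`. -/
def M1 (P : @Measure Ω mΩ) (𝒞 : Set (CondRaw Ω E)) (μ : CondRaw Ω E → Ω → ℝ≥0∞) : Prop :=
  ∀ S ∈ 𝒞, μ S =ᵐ[P] S.2.indicator (μ S)

/-- Property (M2): countable additivity on pairwise disjoint sequences whose
conditional union belongs to the domain. -/
def M2 (P : @Measure Ω mΩ) (X : Set (Ω → E)) (𝒳 : Set (CondRaw Ω E))
    (μ : CondRaw Ω E → Ω → ℝ≥0∞) : Prop :=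
  ∀ S : ℕ → CondRaw Ω E, (∀ k, S k ∈ 𝒳) →
    (∀ i j, i ≠ j → cdisjoint P X (S i) (S j)) → cSupFam P X S ∈ 𝒳 →
    μ (cSupFam P X S) =ᵐ[P] fun ω => ∑' k, μ (S k) ω

/-- Finite additivity: (M2) for finite pairwise disjoint families. -/
def FinAdd (P : @Measure Ω mΩ) (X : Set (Ω → E)) (𝒳 : Set (CondRaw Ω E))
    (μ : CondRaw Ω E → Ω → ℝ≥0∞) : Prop :=
  ∀ (n : ℕ) (S : Fin n → CondRaw Ω E), (∀ k, S k ∈ 𝒳) →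
    (∀ i j, i ≠ j → cdisjoint P X (S i) (S j)) → cSupFam P X S ∈ 𝒳 →
    μ (cSupFam P X S) =ᵐ[P] fun ω => ∑ k, μ (S k) ω

/-- A stable measure (or stable pre-measure, when the domain is merely a stable
ring): a stable set function satisfying (M1) and (M2). -/
def IsStableMeasureOn (P : @Measure Ω mΩ) (X : Set (Ω → E)) (𝒳 : Set (CondRaw Ω E))
    (μ : CondRaw Ω E → Ω → ℝ≥0∞) : Prop :=
  IsStableSetFun P 𝒳 μ ∧ M1 P 𝒳 μ ∧ M2 P X 𝒳 μ

/-- A finite stable measure. -/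
def IsFiniteStableMeasureOn (P : @Measure Ω mΩ) (X : Set (Ω → E))
    (𝒳 : Set (CondRaw Ω E)) (μ : CondRaw Ω E → Ω → ℝ≥0∞) : Prop :=
  IsStableMeasureOn P X 𝒳 μ ∧ ∀ᵐ ω ∂P, μ (ctop X) ω < ∞

/-- A stable probability measure. -/
def IsStableProbOn (P : @Measure Ω mΩ) (X : Set (Ω → E)) (𝒳 : Set (CondRaw Ω E))
    (μ : CondRaw Ω E → Ω → ℝ≥0∞) : Prop :=
  IsStableMeasureOn P X 𝒳 μ ∧ μ (ctop X) =ᵐ[P] fun _ => (1 : ℝ≥0∞)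

/-- A stable outer measure on the conditional power set of `X`. -/
def IsStableOuter (P : @Measure Ω mΩ) (X : Set (Ω → E))
    (μ : CondRaw Ω E → Ω → ℝ≥0∞) : Prop :=
  (∀ S, IsCond P X S → Measurable[mΩ] (μ S)) ∧
    (∀ S T, IsCond P X S → IsCond P X T → ceq P S T → μ S =ᵐ[P] μ T) ∧
    (∀ (A : Partition mΩ P) (S : ℕ → CondRaw Ω E), (∀ k, IsCond P X (S k)) →
      μ (condConcat P A S) =ᵐ[P] A.concat fun k => μ (S k)) ∧
    (∀ S, IsCond P X S → ∀ B, MeasurableSet[mΩ] B →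
      μ (crestrict S B) =ᵐ[P] B.indicator (μ S)) ∧
    (∀ S T, IsCond P X S → IsCond P X T → cle P S T → ∀ᵐ ω ∂P, μ S ω ≤ μ T ω) ∧
    ∀ S : ℕ → CondRaw Ω E, (∀ k, IsCond P X (S k)) →
      ∀ᵐ ω ∂P, μ (cSupFam P X S) ω ≤ ∑' k, μ (S k) ω

/-- Stable Carathéodory measurability with respect to a stable outer measure. -/
def CaraMeasurable (P : @Measure Ω mΩ) (X : Set (Ω → E))
    (μ : CondRaw Ω E → Ω → ℝ≥0∞) (S : CondRaw Ω E) : Prop :=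
  ∀ T, IsCond P X T →
    (fun ω => μ (cInf₂ P X T S) ω + μ (cInf₂ P X T (ccompl P X S)) ω) =ᵐ[P] μ T

/-! ### Stable functions, the stable Borel σ-algebra on `L⁰`, and the integral -/

/-- The stable set `L⁰_m(E)` of all (classes of) measurable functions `Ω → E`. -/
def l0m (P : @Measure Ω mΩ) (E : Type*) [MeasurableSpace E] : Set (Ω → E) :=
  {x | AEMeasurable x P}

/-- A stable function between stable sets of functions. -/
def StableFun (P : @Measure Ω mΩ) (X : Set (Ω → E)) (Y : Set (Ω → F'))
    (f : (Ω → E) → Ω → F') : Prop :=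
  (∀ x ∈ X, f x ∈ Y) ∧ (∀ x ∈ X, ∀ y ∈ X, x =ᵐ[P] y → f x =ᵐ[P] f y) ∧
    ∀ (A : Partition mΩ P) (x : ℕ → Ω → E), (∀ k, x k ∈ X) →
      f (A.concat x) =ᵐ[P] A.concat fun k => f (x k)

/-- The conditional preimage `f⁻¹(W|A)`. -/
def cPreimage (P : @Measure Ω mΩ) (X : Set (Ω → E)) (f : (Ω → E) → Ω → F')
    (W : CondRaw Ω F') : CondRaw Ω E :=
  ({x ∈ X | memOn P (largestSet P fun C => P (C \ W.2) = 0 ∧ ∃ x ∈ X, memOn P C (f x) W.1)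
      (f x) W.1},
    largestSet P fun C => P (C \ W.2) = 0 ∧ ∃ x ∈ X, memOn P C (f x) W.1)

/-- The stable Borel σ-algebra `B(L⁰)` on `L⁰`, generated by the stable open balls. -/
def borelL0 (P : @Measure Ω mΩ) : Set (CondRaw Ω ℝ) :=
  sigmaGen P (l0m P ℝ)
    {S | ∃ r ε : Ω → ℝ, AEMeasurable r P ∧ AEMeasurable ε P ∧ (∀ᵐ ω ∂P, 0 < ε ω) ∧
      ceq P S ({s | AEMeasurable s P ∧ ∀ᵐ ω ∂P, |s ω - r ω| < ε ω}, univ)}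

/-- A stably measurable function `f : X → L⁰` with respect to a stable σ-algebra `𝒳`. -/
def StablyMeasurable (P : @Measure Ω mΩ) (X : Set (Ω → E)) (𝒳 : Set (CondRaw Ω E))
    (f : (Ω → E) → Ω → ℝ) : Prop :=
  StableFun P X (l0m P ℝ) f ∧ ∀ W ∈ borelL0 P, cPreimage P X f W ∈ 𝒳

/-- The base set `A_x` of the stable indicator function of `S = V|A` at `x`. -/
def indBase (P : @Measure Ω mΩ) (S : CondRaw Ω E) (x : Ω → E) : Set Ω :=
  largestSet P fun C => P (C \ S.2) = 0 ∧ memOn P C x S.1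

/-- The stable indicator function `1_{V|A} : X → L⁰`. -/
def cIndicator (P : @Measure Ω mΩ) (S : CondRaw Ω E) (x : Ω → E) : Ω → ℝ :=
  (indBase P S x).indicator fun _ => (1 : ℝ)

/-- Data of a stable elementary function: coefficients and conditional sets. -/
def ElemRep (Ω E : Type*) := Σ n : ℕ, (Fin n → Ω → ℝ) × (Fin n → CondRaw Ω E)

/-- The function `∑_{k ≤ n} r_k 1_{V_k|A_k}` represented by `ρ`. -/
def repFun (P : @Measure Ω mΩ) (ρ : ElemRep Ω E) : (Ω → E) → Ω → ℝ :=
  fun x ω => ∑ k, ρ.2.1 k ω * cIndicator P (ρ.2.2 k) x ω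

/-- The representation `ρ` is admissible: nonnegative `L⁰`-coefficients and a finite
pairwise disjoint family in `𝒳` whose conditional union is `X`. -/
def GoodRep (P : @Measure Ω mΩ) (X : Set (Ω → E)) (𝒳 : Set (CondRaw Ω E))
    (ρ : ElemRep Ω E) : Prop :=
  (∀ k, AEMeasurable (ρ.2.1 k) P) ∧ (∀ k, ∀ᵐ ω ∂P, 0 ≤ ρ.2.1 k ω) ∧
    (∀ k, ρ.2.2 k ∈ 𝒳) ∧ (∀ i j, i ≠ j → cdisjoint P X (ρ.2.2 i) (ρ.2.2 j)) ∧
    ceq P (cSupFam P X ρ.2.2) (ctop X)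

/-- A stable elementary function. -/
def IsElementary (P : @Measure Ω mΩ) (X : Set (Ω → E)) (𝒳 : Set (CondRaw Ω E))
    (f : (Ω → E) → Ω → ℝ) : Prop :=
  ∃ ρ : ElemRep Ω E, GoodRep P X 𝒳 ρ ∧ ∀ x ∈ X, f x =ᵐ[P] repFun P ρ x

/-- The stable Lebesgue integral `∑_k r_k μ(V_k|A_k)` of the elementary representation. -/
def repInt (μ : CondRaw Ω E → Ω → ℝ≥0∞) (ρ : ElemRep Ω E) : Ω → ℝ≥0∞ :=
  fun ω => ∑ k, ENNReal.ofReal (ρ.2.1 k ω) * μ (ρ.2.2 k) ω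

/-- The stable Lebesgue integral of a nonnegative function, as the supremum of the
integrals of the dominated stable elementary functions. -/
def cIntNN (P : @Measure Ω mΩ) (X : Set (Ω → E)) (𝒳 : Set (CondRaw Ω E))
    (μ : CondRaw Ω E → Ω → ℝ≥0∞) (f : (Ω → E) → Ω → ℝ) : Ω → ℝ≥0∞ :=
  fun ω =>
    ⨆ ρ : {ρ : ElemRep Ω E // GoodRep P X 𝒳 ρ ∧
        ∀ x ∈ X, ∀ᵐ ω' ∂P, repFun P ρ x ω' ≤ f x ω'},
      repInt μ ρ.1 ω

/-- The positive part `f⁺` of an `L⁰`-valued function. -/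
def fplus (f : (Ω → E) → Ω → ℝ) : (Ω → E) → Ω → ℝ := fun x ω => max (f x ω) 0

/-- The negative part `f⁻` of an `L⁰`-valued function. -/
def fminus (f : (Ω → E) → Ω → ℝ) : (Ω → E) → Ω → ℝ := fun x ω => max (-(f x ω)) 0

/-- Stable integrability of `f : X → L⁰`. -/
def CIntegrable (P : @Measure Ω mΩ) (X : Set (Ω → E)) (𝒳 : Set (CondRaw Ω E))
    (μ : CondRaw Ω E → Ω → ℝ≥0∞) (f : (Ω → E) → Ω → ℝ) : Prop :=
  StablyMeasurable P X 𝒳 f ∧ (∀ᵐ ω ∂P, cIntNN P X 𝒳 μ (fplus f) ω < ∞) ∧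
    ∀ᵐ ω ∂P, cIntNN P X 𝒳 μ (fminus f) ω < ∞

/-- The stable Lebesgue integral `∫_X f dμ := ∫ f⁺ dμ − ∫ f⁻ dμ`. -/
def cInt (P : @Measure Ω mΩ) (X : Set (Ω → E)) (𝒳 : Set (CondRaw Ω E))
    (μ : CondRaw Ω E → Ω → ℝ≥0∞) (f : (Ω → E) → Ω → ℝ) : Ω → ℝ :=
  fun ω => (cIntNN P X 𝒳 μ (fplus f) ω).toReal - (cIntNN P X 𝒳 μ (fminus f) ω).toReal

/-! ### Products and sections -/

/-- The pairing `ω ↦ (x ω, y ω)`. -/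
def pairFn (x : Ω → E) (y : Ω → F') : Ω → E × F' := fun ω => (x ω, y ω)

/-- The Cartesian product `X × Y` of two stable sets, as a stable set of functions
`Ω → E × F'`. -/
def prodSet (P : @Measure Ω mΩ) (X : Set (Ω → E)) (Y : Set (Ω → F')) :
    Set (Ω → E × F') :=
  {z | ∃ x ∈ X, ∃ y ∈ Y, z =ᵐ[P] pairFn x y}

/-- The conditional rectangle `V|A × W|B := (V × W)|A ∩ B`. -/
def crect (P : @Measure Ω mΩ) (S : CondRaw Ω E) (T : CondRaw Ω F') :
    CondRaw Ω (E × F') :=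
  (prodSet P S.1 T.1, S.2 ∩ T.2)

/-- The stable product σ-algebra `𝒳 ⊗ 𝒴`, generated by the conditional rectangles. -/
def prodSigma (P : @Measure Ω mΩ) (X : Set (Ω → E)) (Y : Set (Ω → F'))
    (𝒳 : Set (CondRaw Ω E)) (𝒴 : Set (CondRaw Ω F')) : Set (CondRaw Ω (E × F')) :=
  sigmaGen P (prodSet P X Y) {R | ∃ S ∈ 𝒳, ∃ T ∈ 𝒴, ceq P R (crect P S T)}

/-- The conditional `x`-section `(Z|C)_x` of a conditional subset of `X × Y`. -/
def xsection (P : @Measure Ω mΩ) (Y : Set (Ω → F')) (Z : CondRaw Ω (E × F'))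
    (x : Ω → E) : CondRaw Ω F' :=
  ({y ∈ Y | memOn P (largestSet P fun D => P (D \ Z.2) = 0 ∧ ∃ y ∈ Y, memOn P D (pairFn x y) Z.1)
      (pairFn x y) Z.1},
    largestSet P fun D => P (D \ Z.2) = 0 ∧ ∃ y ∈ Y, memOn P D (pairFn x y) Z.1)

/-- The conditional `y`-section `(Z|C)_y` of a conditional subset of `X × Y`. -/
def ysection (P : @Measure Ω mΩ) (X : Set (Ω → E)) (Z : CondRaw Ω (E × F'))
    (y : Ω → F') : CondRaw Ω E :=
  ({x ∈ X | memOn P (largestSet P fun D => P (D \ Z.2) = 0 ∧ ∃ x ∈ X, memOn P D (pairFn x y) Z.1)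
      (pairFn x y) Z.1},
    largestSet P fun D => P (D \ Z.2) = 0 ∧ ∃ x ∈ X, memOn P D (pairFn x y) Z.1)

/-! ### Conditional subsets of `L⁰_m(E)` associated to measurable sets -/

/-- `L⁰_m(F) = {x ∈ L⁰_m(E) : x ∈ F a.s.}` for a measurable `F ⊆ E`. -/
def l0mF (P : @Measure Ω mΩ) {E : Type*} [MeasurableSpace E] (F : Set E) : Set (Ω → E) :=
  {x | AEMeasurable x P ∧ ∀ᵐ ω ∂P, x ω ∈ F}

/-- `∑ L⁰_m(F_k)|A_k = {x ∈ L⁰_m(E) : x ∈ F_k a.s. on A_k for all k}`. -/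
def l0mConcat (P : @Measure Ω mΩ) {E : Type*} [MeasurableSpace E]
    (A : Partition mΩ P) (F : ℕ → Set E) : Set (Ω → E) :=
  {x | AEMeasurable x P ∧ ∀ k, ∀ᵐ ω ∂P, ω ∈ A.part k → x ω ∈ F k}

/-- The stable ring `ℛ` on `L⁰_m(E)` generated by a measurable structure on `E`:
all conditional subsets of the form `(∑ L⁰_m(F_k)|A_k)|B`. -/
def ringR (P : @Measure Ω mΩ) (E : Type*) [MeasurableSpace E] : Set (CondRaw Ω E) :=
  {S | ∃ (F : ℕ → Set E) (A : Partition mΩ P) (B : Set Ω),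
    (∀ k, MeasurableSet (F k)) ∧ MeasurableSet[mΩ] B ∧
      ceq P S (l0mConcat P A F, B)}

end CondMT

namespace CondMT

/-!
A conditional subset `S` of `X` is encoded by a set `G ⊆ (Ω → E) × Ω`, its graph, whose slice at
`x ∈ X` is almost surely the largest event on which `x` belongs to `S`. Conditional unions,
intersections and complements become unions, intersections and complements of graphs, and a
concatenation along `(A_k)` becomes `⋃ k, G_k ∩ (univ × A_k)`. The classical π-λ theorem on
`(Ω → E) × Ω`, applied to the graphs of members of `ℰ` cut by cylinders `univ × A`, therefore
gives a π-λ theorem for stable Dynkin systems. It shows that `μ` and `ν` restricted to `Z_k`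
coincide, because these restrictions are finite, agree on `ℰ` and have the same total mass;
disjointifying the `Z_k` then gives `μ = ν`.
-/

section Concatenation

variable {Ω E : Type*} {mΩ : MeasurableSpace Ω} {P : Measure Ω}

/-- The index of the first cell of the partition containing `ω`, and `0` on the null set of points
lying in no cell. Concatenation along the partition is then selection by this index. -/
def Partition.index (A : Partition mΩ P) : Ω → ℕ := A.concat fun k _ => k

theorem Partition.concat_apply (A : Partition mΩ P) (x : ℕ → Ω → E) (ω : Ω) :
    A.concat x ω = x (A.index ω) ω := by
  unfold Partition.index Partition.concat
  split_ifs <;> rfl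

theorem Partition.ae_mem_part_iff (A : Partition mΩ P) :
    ∀ᵐ ω ∂P, ∀ k, ω ∈ A.part k ↔ A.index ω = k := by
  have hdisj : ∀ᵐ ω ∂P, ∀ i j, i ≠ j → ω ∉ A.part i ∩ A.part j := by
    simp only [ae_all_iff]
    exact fun i j hij => measure_eq_zero_iff_ae_notMem.1 (A.disj i j hij)
  have hcover : ∀ᵐ ω ∂P, ω ∈ ⋃ k, A.part k := mem_ae_iff.2 A.cover
  filter_upwards [hdisj, hcover] with ω hd hc k
  have hex : ∃ k, ω ∈ A.part k := mem_iUnion.1 hc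
  have hmem : ω ∈ A.part (A.index ω) := by
    unfold Partition.index Partition.concat
    rw [dif_pos hex]
    classical exact Nat.find_spec hex
  exact ⟨fun h => by_contra fun hne => hd _ _ hne ⟨hmem, h⟩, fun h => h ▸ hmem⟩

/-- The partition into the level sets of a measurable index function. -/
def Partition.ofIndex (P : Measure Ω) {f : Ω → ℕ} (hf : Measurable f) : Partition mΩ P where
  part k := f ⁻¹' {k}
  meas k := hf (measurableSet_singleton k)
  disj i j hij := by
    rw [← preimage_inter, singleton_inter_eq_empty.2 (mem_singleton_iff.not.2 hij), preimage_empty,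
      measure_empty]
  cover := by
    rw [← preimage_iUnion, iUnion_of_singleton, preimage_univ, compl_univ, measure_empty]

theorem Partition.index_ofIndex {f : Ω → ℕ} (hf : Measurable f) :
    (Partition.ofIndex P hf).index = f := by
  funext ω
  have hex : ∃ k, ω ∈ (Partition.ofIndex P hf).part k := ⟨f ω, rfl⟩
  unfold Partition.index Partition.concat
  rw [dif_pos hex]
  classical exact (Nat.find_spec hex).symm

theorem Stable.select_mem {V : Set (Ω → E)} (hV : Stable P V) {f : Ω → ℕ} (hf : Measurable f)
    {x : ℕ → Ω → E} (hx : ∀ k, x k ∈ V) : (fun ω => x (f ω) ω) ∈ V := by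
  convert hV.2.2 (.ofIndex P hf) x hx using 1
  funext ω
  rw [Partition.concat_apply, Partition.index_ofIndex]

open Classical in
theorem Stable.piecewise_mem {V : Set (Ω → E)} (hV : Stable P V) {C : Set Ω}
    (hC : MeasurableSet C) {x y : Ω → E} (hx : x ∈ V) (hy : y ∈ V) : C.piecewise x y ∈ V := by
  have hf : Measurable (C.piecewise (fun _ => 0) (fun _ => 1) : Ω → ℕ) :=
    measurable_const.piecewise hC measurable_const
  have hxy : ∀ k, Nat.casesOn k x (fun _ => y) ∈ V := by rintro (_ | _) <;> assumption
  convert hV.select_mem hf hxy using 1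
  funext ω
  by_cases h : ω ∈ C <;> simp [h]

theorem exists_measurable_index {C : ℕ → Set Ω} (hC : ∀ k, MeasurableSet (C k)) :
    ∃ f : Ω → ℕ, Measurable f ∧ ∀ ω ∈ ⋃ k, C k, ω ∈ C (f ω) := by
  classical
  have hex : ∀ ω, ∃ k, ω ∈ C k ∪ (⋃ k, C k)ᶜ := fun ω => by
    by_cases h : ω ∈ ⋃ k, C k
    · exact (mem_iUnion.1 h).imp fun _ => Or.inl
    · exact ⟨0, Or.inr h⟩
  exact ⟨fun ω => Nat.find (hex ω),
    measurable_find hex fun k => (hC k).union (MeasurableSet.iUnion hC).compl,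
    fun ω hω => (Nat.find_spec (hex ω)).resolve_right (not_not.2 hω)⟩

end Concatenation

section Exhaustion

variable {Ω : Type*} {mΩ : MeasurableSpace Ω} {P : Measure Ω} [SFinite P] {Φ : Set Ω → Prop}

theorem exists_largest_measurableSet (h_empty : Φ ∅)
    (h_iUnion : ∀ C : ℕ → Set Ω, (∀ k, MeasurableSet (C k)) → (∀ k, Φ (C k)) → Φ (⋃ k, C k)) :
    ∃ C, MeasurableSet C ∧ Φ C ∧ ∀ D, MeasurableSet D → Φ D → P (D \ C) = 0 := by
  let Q := P.toFinite
  obtain ⟨u, -, hu_tendsto, hu⟩ := exists_seq_tendsto_sSup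
    (S := {r | ∃ C, MeasurableSet C ∧ Φ C ∧ Q C = r}) ⟨_, ∅, .empty, h_empty, rfl⟩
    (OrderTop.bddAbove _)
  choose C hC hΦC hCu using hu
  have hCm : MeasurableSet (⋃ n, C n) := .iUnion hC
  refine ⟨⋃ n, C n, hCm, h_iUnion C hC hΦC, fun D hD hΦD => ?_⟩
  have hΦu : Φ (D ∪ ⋃ n, C n) := by
    have h := h_iUnion (fun n => Nat.casesOn n D C) (by rintro (_ | n); exacts [hD, hC n])
      (by rintro (_ | n); exacts [hΦD, hΦC n])
    rwa [← union_iUnion_nat_succ] at h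
  have hmax : Q (D ∪ ⋃ n, C n) ≤ Q (⋃ n, C n) := by
    calc Q (D ∪ ⋃ n, C n) ≤ sSup {r | ∃ C, MeasurableSet C ∧ Φ C ∧ Q C = r} :=
          le_sSup ⟨_, hD.union hCm, hΦu, rfl⟩
      _ ≤ Q (⋃ n, C n) := le_of_tendsto' hu_tendsto fun n =>
          hCu n ▸ measure_mono (subset_iUnion C n)
  have hae : (⋃ n, C n : Set Ω) =ᵐ[Q] (D ∪ ⋃ n, C n : Set Ω) :=
    ae_eq_of_subset_of_measure_ge subset_union_right hmax hCm.nullMeasurableSet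
      (measure_ne_top _ _)
  rw [show ae Q = ae P from ae_toFinite] at hae
  rw [← union_sdiff_right]
  exact ae_le_set.1 hae.symm.le

theorem largestSet_spec (h_empty : Φ ∅)
    (h_iUnion : ∀ C : ℕ → Set Ω, (∀ k, MeasurableSet (C k)) → (∀ k, Φ (C k)) → Φ (⋃ k, C k)) :
    MeasurableSet (largestSet P Φ) ∧ Φ (largestSet P Φ) ∧
      ∀ C, MeasurableSet C → Φ C → P (C \ largestSet P Φ) = 0 := by
  have h := exists_largest_measurableSet (P := P) h_empty h_iUnion
  rw [largestSet, dif_pos h]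
  exact h.choose_spec

end Exhaustion

section Membership

variable {Ω E : Type*} {mΩ : MeasurableSpace Ω} {P : Measure Ω} {S T : CondRaw Ω E}
  {C D : Set Ω} {x y : Ω → E}

/-- The restriction `x|C` lies in the conditional set `S = V|A`, that is, `C ⊆ A` almost surely and
`x` agrees almost surely on `C` with an element of `V`. By definition `indBase P S x` is the largest
set `C` of this kind. -/
def MemOver (P : Measure Ω) (S : CondRaw Ω E) (C : Set Ω) (x : Ω → E) : Prop :=
  P (C \ S.2) = 0 ∧ memOn P C x S.1

theorem MemOver.ae_mem_snd (h : MemOver P S C x) : ∀ᵐ ω ∂P, ω ∈ C → ω ∈ S.2 :=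
  ae_le_set.2 h.1

theorem MemOver.mono (h : MemOver P S C x) (hDC : ∀ᵐ ω ∂P, ω ∈ D → ω ∈ C) :
    MemOver P S D x := by
  obtain ⟨y, hy, hxy⟩ := h.2
  refine ⟨ae_le_set.1 ?_, y, hy, ?_⟩
  · filter_upwards [hDC, h.ae_mem_snd] with ω h₁ h₂ hω using h₂ (h₁ hω)
  · filter_upwards [hDC, hxy] with ω h₁ h₂ hω using h₂ (h₁ hω)

theorem MemOver.congr (h : MemOver P S C x) (hxy : ∀ᵐ ω ∂P, ω ∈ C → x ω = y ω) :
    MemOver P S C y := by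
  obtain ⟨z, hz, hxz⟩ := h.2
  refine ⟨h.1, z, hz, ?_⟩
  filter_upwards [hxy, hxz] with ω h₁ h₂ hω using (h₁ hω).symm.trans (h₂ hω)

theorem MemOver.of_cle (h : MemOver P S C x) (hST : cle P S T) : MemOver P T C x := by
  obtain ⟨y, hy, hxy⟩ := h.2
  obtain ⟨z, hz, hyz⟩ := hST.2 y hy
  refine ⟨ae_le_set.1 ?_, z, hz, ?_⟩
  · filter_upwards [h.ae_mem_snd, ae_le_set.2 hST.1] with ω h₁ h₂ hω using h₂ (h₁ hω)
  · filter_upwards [h.ae_mem_snd, hxy, hyz] with ω h₁ h₂ h₃ hω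
    exact (h₂ hω).trans (h₃ (h₁ hω))

theorem memOver_snd (hx : x ∈ S.1) : MemOver P S S.2 x :=
  ⟨by rw [sdiff_self, measure_empty], x, hx, ae_of_all _ fun _ _ => rfl⟩

theorem memOver_empty (hS : S.1.Nonempty) : MemOver P S ∅ x :=
  ⟨by rw [empty_sdiff, measure_empty], hS.some, hS.some_mem, ae_of_all _ fun _ => False.elim⟩

theorem MemOver.iUnion {C : ℕ → Set Ω} (hS : Stable P S.1) (hC : ∀ k, MeasurableSet (C k))
    (h : ∀ k, MemOver P S (C k) x) : MemOver P S (⋃ k, C k) x := by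
  choose y hy hxy using fun k => (h k).2
  obtain ⟨f, hf, hfC⟩ := exists_measurable_index hC
  refine ⟨?_, _, hS.select_mem hf hy, ?_⟩
  · rw [iUnion_sdiff, measure_iUnion_null_iff]
    exact fun k => (h k).1
  · filter_upwards [ae_all_iff.2 hxy] with ω h hω using h (f ω) (hfC ω hω)

variable [SFinite P]

theorem indBase_spec (hS : Stable P S.1) (x : Ω → E) :
    MeasurableSet (indBase P S x) ∧ MemOver P S (indBase P S x) x ∧
      ∀ C, MeasurableSet C → MemOver P S C x → P (C \ indBase P S x) = 0 :=
  largestSet_spec (memOver_empty hS.1) fun _ hC => MemOver.iUnion hS hC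

theorem memOver_iff_indBase (hS : Stable P S.1) (hC : MeasurableSet C) :
    MemOver P S C x ↔ ∀ᵐ ω ∂P, ω ∈ C → ω ∈ indBase P S x :=
  ⟨fun h => ae_le_set.2 ((indBase_spec hS x).2.2 C hC h), (indBase_spec hS x).2.1.mono⟩

end Membership

section Graph

variable {Ω E : Type*} {mΩ : MeasurableSpace Ω} {P : Measure Ω} {X : Set (Ω → E)}
  {S T : CondRaw Ω E} {G H : Set ((Ω → E) × Ω)}

/-- `G` represents the conditional set `S`: up to null sets, the slice of `G` at `x ∈ X` is the base
of the stable indicator of `S` at `x`. Conditional set operations then become set operations. -/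
structure IsGraph (P : Measure Ω) (X : Set (Ω → E)) (G : Set ((Ω → E) × Ω))
    (S : CondRaw Ω E) : Prop where
  isCond : IsCond P X S
  ae_mem_iff : ∀ x ∈ X, ∀ᵐ ω ∂P, (x, ω) ∈ G ↔ ω ∈ indBase P S x

theorem IsCond.exists_isGraph (hS : IsCond P X S) : ∃ G, IsGraph P X G S :=
  ⟨{p | p.2 ∈ indBase P S p.1}, hS, fun _ _ => ae_of_all _ fun _ => Iff.rfl⟩

theorem IsGraph.congr (h : IsGraph P X G S)
    (hGH : ∀ x ∈ X, ∀ᵐ ω ∂P, (x, ω) ∈ H ↔ (x, ω) ∈ G) : IsGraph P X H S := by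
  refine ⟨h.isCond, fun x hx => ?_⟩
  filter_upwards [h.ae_mem_iff x hx, hGH x hx] with ω h₁ h₂ using h₂.trans h₁

variable [SFinite P]

theorem IsGraph.memOver_iff (h : IsGraph P X G S) {x : Ω → E} (hx : x ∈ X) {C : Set Ω}
    (hC : MeasurableSet C) : MemOver P S C x ↔ ∀ᵐ ω ∂P, ω ∈ C → (x, ω) ∈ G := by
  rw [memOver_iff_indBase h.isCond.1 hC]
  refine eventually_congr ?_
  filter_upwards [h.ae_mem_iff x hx] with ω hω
  rw [hω]

theorem IsGraph.cle_iff (hG : IsGraph P X G S) (hH : IsGraph P X H T) :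
    cle P S T ↔ ∀ x ∈ X, ∀ᵐ ω ∂P, (x, ω) ∈ G → (x, ω) ∈ H := by
  constructor
  · intro h x hx
    obtain ⟨hm, hmem, -⟩ := indBase_spec hG.isCond.1 x
    filter_upwards [hG.ae_mem_iff x hx, (hH.memOver_iff hx hm).1 (hmem.of_cle h)] with ω h₁ h₂ hω
    exact h₂ (h₁.1 hω)
  · intro h
    have hmem : ∀ x ∈ S.1, MemOver P T S.2 x := fun x hx => by
      have hxX := hG.isCond.2.1 hx
      rw [hH.memOver_iff hxX hG.isCond.2.2]
      filter_upwards [(hG.memOver_iff hxX hG.isCond.2.2).1 (memOver_snd hx), h x hxX]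
        with ω h₁ h₂ hω using h₂ (h₁ hω)
    obtain ⟨x, hx⟩ := hG.isCond.1.1
    exact ⟨(hmem x hx).1, fun x hx => (hmem x hx).2⟩

theorem IsGraph.unique (hS : IsGraph P X G S) (hT : IsGraph P X G T) : ceq P S T :=
  ⟨(hS.cle_iff hT).2 fun _ _ => ae_of_all _ fun _ => id,
    (hT.cle_iff hS).2 fun _ _ => ae_of_all _ fun _ => id⟩

theorem IsGraph.ae_iff_of_ceq (hG : IsGraph P X G S) (hH : IsGraph P X H T) (h : ceq P S T) :
    ∀ x ∈ X, ∀ᵐ ω ∂P, (x, ω) ∈ G ↔ (x, ω) ∈ H := fun x hx => by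
  filter_upwards [(hG.cle_iff hH).1 h.1 x hx, (hH.cle_iff hG).1 h.2 x hx] with ω h₁ h₂
  exact ⟨h₁, h₂⟩

theorem IsGraph.of_ceq (h : IsGraph P X G S) (hT : IsCond P X T) (hST : ceq P S T) :
    IsGraph P X G T := by
  obtain ⟨H, hH⟩ := hT.exists_isGraph
  exact hH.congr (h.ae_iff_of_ceq hH hST)

theorem IsGraph.nullMeasurableSet_slice (h : IsGraph P X G S) {x : Ω → E} (hx : x ∈ X) :
    NullMeasurableSet (Prod.mk x ⁻¹' G) P :=
  (indBase_spec h.isCond.1 x).1.nullMeasurableSet.congr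
    (eventuallyEq_set.2 ((h.ae_mem_iff x hx).mono fun _ => Iff.symm))

theorem isGraph_of_memOver_iff (hS : IsCond P X S)
    (h_slice : ∀ x ∈ X, NullMeasurableSet (Prod.mk x ⁻¹' G) P)
    (h : ∀ x ∈ X, ∀ C, MeasurableSet C → (MemOver P S C x ↔ ∀ᵐ ω ∂P, ω ∈ C → (x, ω) ∈ G)) :
    IsGraph P X G S := by
  refine ⟨hS, fun x hx => ?_⟩
  obtain ⟨D, hDm, hD⟩ := h_slice x hx
  obtain ⟨hBm, hB, -⟩ := indBase_spec hS.1 x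
  have hD_mem : MemOver P S D x :=
    (h x hx D hDm).2 (hD.mem_iff.mono fun _ => Iff.mpr)
  filter_upwards [hD.mem_iff, (memOver_iff_indBase hS.1 hDm).1 hD_mem, (h x hx _ hBm).1 hB]
    with ω h₁ h₂ h₃
  exact ⟨fun hω => h₂ (h₁.1 hω), h₃⟩

theorem isGraph_empty (hX : Stable P X) : IsGraph P X ∅ (cbot X) := by
  refine ⟨⟨hX, Subset.rfl, .empty⟩, fun x _ => ?_⟩
  filter_upwards [(indBase_spec (S := cbot X) hX x).2.1.ae_mem_snd] with ω hω
  exact ⟨False.elim, hω⟩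

theorem isGraph_univ (hX : Stable P X) : IsGraph P X univ (ctop X) := by
  refine ⟨⟨hX, Subset.rfl, .univ⟩, fun x hx => ?_⟩
  filter_upwards [(memOver_iff_indBase (S := ctop X) hX .univ).1 (memOver_snd hx)] with ω hω
  exact ⟨fun _ => hω trivial, fun _ => trivial⟩

end Graph

section Local

variable {Ω E : Type*} {mΩ : MeasurableSpace Ω} {P : Measure Ω} {X : Set (Ω → E)}
  {S : CondRaw Ω E} {G H : Set ((Ω → E) × Ω)}

/-- The slice of `G` at `x ∈ X` is null-measurable and depends locally on `x`: where `x` and `y`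
agree, so do the slices at `x` and at `y`. On a stable set these are exactly the graphs of
conditional subsets, see `IsGraph.isLocal` and `IsLocal.isGraph_condOfGraph`. -/
structure IsLocal (P : Measure Ω) (X : Set (Ω → E)) (G : Set ((Ω → E) × Ω)) : Prop where
  nullMeasurableSet_slice : ∀ x ∈ X, NullMeasurableSet (Prod.mk x ⁻¹' G) P
  ae_mem_of_eqOn : ∀ x ∈ X, ∀ y ∈ X, ∀ C, MeasurableSet C → (∀ᵐ ω ∂P, ω ∈ C → x ω = y ω) →
    ∀ᵐ ω ∂P, ω ∈ C → (x, ω) ∈ G → (y, ω) ∈ G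

theorem IsGraph.isLocal [SFinite P] (h : IsGraph P X G S) : IsLocal P X G := by
  refine ⟨fun x hx => h.nullMeasurableSet_slice hx, fun x hx y hy C hC hxy => ?_⟩
  obtain ⟨hBm, hB, -⟩ := indBase_spec h.isCond.1 x
  have hCB : MemOver P S (C ∩ indBase P S x) y :=
    (hB.mono (ae_of_all _ fun _ => And.right)).congr (hxy.mono fun _ h hω => h hω.1)
  filter_upwards [(h.memOver_iff hy (hC.inter hBm)).1 hCB, h.ae_mem_iff x hx] with ω h₁ h₂ hω hG
  exact h₁ ⟨hω, h₂.1 hG⟩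

theorem IsLocal.iUnion {ι : Type*} [Countable ι] {G : ι → Set ((Ω → E) × Ω)}
    (h : ∀ k, IsLocal P X (G k)) : IsLocal P X (⋃ k, G k) where
  nullMeasurableSet_slice x hx := by
    rw [preimage_iUnion]
    exact .iUnion fun k => (h k).nullMeasurableSet_slice x hx
  ae_mem_of_eqOn x hx y hy C hC hxy := by
    filter_upwards [ae_all_iff.2 fun k => (h k).ae_mem_of_eqOn x hx y hy C hC hxy] with ω h hω hG
    obtain ⟨k, hk⟩ := mem_iUnion.1 hG
    exact mem_iUnion.2 ⟨k, h k hω hk⟩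

theorem IsLocal.inter (hG : IsLocal P X G) (hH : IsLocal P X H) : IsLocal P X (G ∩ H) where
  nullMeasurableSet_slice x hx :=
    (hG.nullMeasurableSet_slice x hx).inter (hH.nullMeasurableSet_slice x hx)
  ae_mem_of_eqOn x hx y hy C hC hxy := by
    filter_upwards [hG.ae_mem_of_eqOn x hx y hy C hC hxy, hH.ae_mem_of_eqOn x hx y hy C hC hxy]
      with ω h₁ h₂ hω h
    exact ⟨h₁ hω h.1, h₂ hω h.2⟩

theorem IsLocal.compl (hG : IsLocal P X G) : IsLocal P X Gᶜ where
  nullMeasurableSet_slice x hx := (hG.nullMeasurableSet_slice x hx).compl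
  ae_mem_of_eqOn x hx y hy C hC hxy := by
    have hyx : ∀ᵐ ω ∂P, ω ∈ C → y ω = x ω := hxy.mono fun _ h hω => (h hω).symm
    filter_upwards [hG.ae_mem_of_eqOn y hy x hx C hC hyx] with ω h hω hx hy using hx (h hω hy)

theorem IsLocal.ae_mem_of_iUnion (hG : IsLocal P X G) {C : ℕ → Set Ω}
    (hC : ∀ k, MeasurableSet (C k)) {x : ℕ → Ω → E} (hx : ∀ k, x k ∈ X) {y : Ω → E} (hy : y ∈ X)
    (hxy : ∀ k, ∀ᵐ ω ∂P, ω ∈ C k → x k ω = y ω) (h : ∀ k, ∀ᵐ ω ∂P, ω ∈ C k → (x k, ω) ∈ G) :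
    ∀ᵐ ω ∂P, ω ∈ ⋃ k, C k → (y, ω) ∈ G := by
  filter_upwards [ae_all_iff.2 h,
    ae_all_iff.2 fun k => hG.ae_mem_of_eqOn (x k) (hx k) y hy (C k) (hC k) (hxy k)] with ω h₁ h₂ hω
  obtain ⟨k, hk⟩ := mem_iUnion.1 hω
  exact h₂ k hk (h₁ k hk)

/-- The largest measurable set on which some `x ∈ X` lies in `G`, the base of the conditional set
with graph `G`. -/
def graphBase (P : Measure Ω) (X : Set (Ω → E)) (G : Set ((Ω → E) × Ω)) : Set Ω :=
  largestSet P fun C => ∃ x ∈ X, ∀ᵐ ω ∂P, ω ∈ C → (x, ω) ∈ G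

theorem IsLocal.graphBase_spec [SFinite P] (hX : Stable P X) (hG : IsLocal P X G) :
    MeasurableSet (graphBase P X G) ∧
      (∃ x ∈ X, ∀ᵐ ω ∂P, ω ∈ graphBase P X G → (x, ω) ∈ G) ∧
      ∀ C, MeasurableSet C → (∃ x ∈ X, ∀ᵐ ω ∂P, ω ∈ C → (x, ω) ∈ G) →
        P (C \ graphBase P X G) = 0 := by
  refine largestSet_spec (Φ := fun C => ∃ x ∈ X, ∀ᵐ ω ∂P, ω ∈ C → (x, ω) ∈ G)
    ⟨hX.1.some, hX.1.some_mem, ae_of_all _ fun _ => False.elim⟩ fun C hC hΦ => ?_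
  choose x hx hxG using hΦ
  obtain ⟨f, hf, hfC⟩ := exists_measurable_index hC
  have hy := hX.select_mem hf hx
  refine ⟨_, hy, ?_⟩
  filter_upwards [hG.ae_mem_of_iUnion (C := fun k => C k ∩ f ⁻¹' {k})
    (fun k => (hC k).inter (hf (measurableSet_singleton k))) hx hy
    (fun k => ae_of_all _ fun ω hω => by rw [show f ω = k from hω.2])
    (fun k => (hxG k).mono fun _ h hω => h hω.1)] with ω h hω
  exact h (mem_iUnion.2 ⟨f ω, hfC ω hω, rfl⟩)

/-- The conditional set with a given local graph, see `IsLocal.isGraph_condOfGraph`. -/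
def condOfGraph (P : Measure Ω) (X : Set (Ω → E)) (G : Set ((Ω → E) × Ω)) : CondRaw Ω E :=
  ({x ∈ X | ∀ᵐ ω ∂P, ω ∈ graphBase P X G → (x, ω) ∈ G}, graphBase P X G)

variable [SFinite P]

theorem IsLocal.isCond_condOfGraph (hX : Stable P X) (hG : IsLocal P X G) :
    IsCond P X (condOfGraph P X G) := by
  obtain ⟨hBm, ⟨x₀, hx₀, hx₀G⟩, -⟩ := hG.graphBase_spec hX
  refine ⟨⟨⟨x₀, hx₀, hx₀G⟩, fun x hx y hxy => ?_, fun A x hx => ?_⟩, fun _ h => h.1, hBm⟩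
  · have hy := hX.2.1 x hx.1 y hxy
    refine ⟨hy, ?_⟩
    filter_upwards [hx.2, hG.ae_mem_of_eqOn x hx.1 y hy univ .univ (hxy.mono fun _ h _ => h)]
      with ω h₁ h₂ hω using h₂ trivial (h₁ hω)
  · have hy := hX.2.2 A x fun k => (hx k).1
    refine ⟨hy, ?_⟩
    have h_eq : ∀ k, ∀ᵐ ω ∂P, ω ∈ graphBase P X G ∩ A.part k → x k ω = A.concat x ω := fun k => by
      filter_upwards [A.ae_mem_part_iff] with ω h hω
      rw [A.concat_apply, (h k).1 hω.2]
    filter_upwards [A.ae_mem_part_iff, hG.ae_mem_of_iUnion (fun k => hBm.inter (A.meas k))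
      (fun k => (hx k).1) hy h_eq (fun k => (hx k).2.mono fun _ h hω => h hω.1)] with ω h₁ h₂ hω
    exact h₂ (mem_iUnion.2 ⟨A.index ω, hω, (h₁ _).2 rfl⟩)

theorem IsLocal.isGraph_condOfGraph (hX : Stable P X) (hG : IsLocal P X G) :
    IsGraph P X G (condOfGraph P X G) := by
  classical
  obtain ⟨-, ⟨x₀, hx₀, hx₀G⟩, hBmax⟩ := hG.graphBase_spec hX
  refine isGraph_of_memOver_iff (hG.isCond_condOfGraph hX) hG.nullMeasurableSet_slice
    fun x hx C hC => ⟨fun h => ?_, fun h => ⟨hBmax C hC ⟨x, hx, h⟩, ?_⟩⟩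
  · obtain ⟨y, ⟨hy, hyG⟩, hxy⟩ := h.2
    have hyx : ∀ᵐ ω ∂P, ω ∈ C → y ω = x ω := hxy.mono fun _ h hω => (h hω).symm
    filter_upwards [h.ae_mem_snd, hyG, hG.ae_mem_of_eqOn y hy x hx C hC hyx] with ω h₁ h₂ h₃ hω
    exact h₃ hω (h₂ (h₁ hω))
  · have h_eq : ∀ᵐ ω ∂P, ω ∈ C → x ω = C.piecewise x x₀ ω :=
      ae_of_all _ fun ω hω => (C.piecewise_eq_of_mem _ _ hω).symm
    have h_eq' : ∀ᵐ ω ∂P, ω ∈ Cᶜ → x₀ ω = C.piecewise x x₀ ω :=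
      ae_of_all _ fun ω hω => (C.piecewise_eq_of_notMem _ _ hω).symm
    have hy := hX.piecewise_mem hC hx hx₀
    refine ⟨_, ⟨hy, ?_⟩, h_eq⟩
    filter_upwards [h, hx₀G, hG.ae_mem_of_eqOn x hx _ hy C hC h_eq,
      hG.ae_mem_of_eqOn x₀ hx₀ _ hy Cᶜ hC.compl h_eq'] with ω h₁ h₂ h₃ h₄ hω
    by_cases hωC : ω ∈ C
    · exact h₃ hωC (h₁ hωC)
    · exact h₄ hωC (h₂ hω)

end Local

section Operations

variable {Ω E : Type*} {mΩ : MeasurableSpace Ω} {P : Measure Ω} {X : Set (Ω → E)}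
  {S T Z : CondRaw Ω E} {G H : Set ((Ω → E) × Ω)} {s : Set (CondRaw Ω E)}

theorem IsSupOf.isSupOf_cSup (h : IsSupOf P X s S) : IsSupOf P X s (cSup P X s) := by
  have h' : ∃ a, IsSupOf P X s a := ⟨S, h⟩
  rw [cSup, dif_pos h']
  exact h'.choose_spec

theorem IsInfOf.isInfOf_cInf (h : IsInfOf P X s S) : IsInfOf P X s (cInf P X s) := by
  have h' : ∃ a, IsInfOf P X s a := ⟨S, h⟩
  rw [cInf, dif_pos h']
  exact h'.choose_spec

theorem isCond_condConcat (hX : Stable P X) (A : Partition mΩ P)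
    {S : ℕ → CondRaw Ω E} (hS : ∀ k, IsCond P X (S k)) :
    IsCond P X (condConcat P A S) := by
  refine ⟨⟨?_, ?_, fun B f hf => ?_⟩, ?_, .iUnion fun k => (A.meas k).inter (hS k).2.2⟩
  · exact ⟨_, fun k => (hS k).1.1.some, fun k => (hS k).1.1.some_mem, .rfl⟩
  · rintro f ⟨x, hx, hfx⟩ g hfg
    exact ⟨x, hx, hfg.symm.trans hfx⟩
  · choose x hx hfx using hf
    refine ⟨fun k => B.concat fun j => x j k, fun k => (hS k).1.2.2 B _ fun j => hx j k, ?_⟩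
    filter_upwards [ae_all_iff.2 hfx] with ω hω
    simp only [Partition.concat_apply] at hω ⊢
    exact hω _
  · rintro f ⟨x, hx, hfx⟩
    exact hX.2.1 _ (hX.2.2 A x fun k => (hS k).2.1 (hx k)) f hfx.symm

theorem memOver_condConcat_iff {A : Partition mΩ P} {S : ℕ → CondRaw Ω E}
    {C : Set Ω} {x : Ω → E} :
    MemOver P (condConcat P A S) C x ↔ ∀ k, MemOver P (S k) (C ∩ A.part k) x := by
  constructor
  · intro h k
    obtain ⟨y, ⟨z, hz, hyz⟩, hxy⟩ := h.2
    refine ⟨ae_le_set.1 ?_, z k, hz k, ?_⟩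
    · filter_upwards [A.ae_mem_part_iff, h.ae_mem_snd] with ω h₁ h₂ hω
      obtain ⟨j, hj, hωj⟩ := mem_iUnion.1 (h₂ hω.1)
      rwa [← (h₁ k).1 hω.2, (h₁ j).1 hj]
    · filter_upwards [A.ae_mem_part_iff, hyz, hxy] with ω h₁ h₂ h₃ hω
      rw [h₃ hω.1, h₂, A.concat_apply, (h₁ k).1 hω.2]
  · intro h
    choose y hy hxy using fun k => (h k).2
    refine ⟨ae_le_set.1 ?_, A.concat y, ⟨y, hy, .rfl⟩, ?_⟩
    · filter_upwards [A.ae_mem_part_iff, ae_all_iff.2 fun k => (h k).ae_mem_snd] with ω h₁ h₂ hω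
      have hωA := (h₁ _).2 rfl
      exact mem_iUnion.2 ⟨_, hωA, h₂ _ ⟨hω, hωA⟩⟩
    · filter_upwards [A.ae_mem_part_iff, ae_all_iff.2 hxy] with ω h₁ h₂ hω
      rw [A.concat_apply, h₂ _ ⟨hω, (h₁ _).2 rfl⟩]

variable [SFinite P]

theorem IsGraph.cSup_of_isSupOf (hG : IsGraph P X G S) (h : IsSupOf P X s S) :
    IsGraph P X G (cSup P X s) :=
  have h' := h.isSupOf_cSup
  hG.of_ceq h'.1 ⟨h.2.2 _ h'.1 h'.2.1, h'.2.2 _ h.1 h.2.1⟩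

theorem IsGraph.cInf_of_isInfOf (hG : IsGraph P X G S) (h : IsInfOf P X s S) :
    IsGraph P X G (cInf P X s) :=
  have h' := h.isInfOf_cInf
  hG.of_ceq h'.1 ⟨h'.2.2 _ h.1 h.2.1, h.2.2 _ h'.1 h'.2.1⟩

theorem isGraph_cSupFam (hX : Stable P X) {G : ℕ → Set ((Ω → E) × Ω)} {S : ℕ → CondRaw Ω E}
    (h : ∀ k, IsGraph P X (G k) (S k)) : IsGraph P X (⋃ k, G k) (cSupFam P X S) := by
  have hU := (IsLocal.iUnion fun k => (h k).isLocal).isGraph_condOfGraph hX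
  refine hU.cSup_of_isSupOf ⟨hU.isCond, ?_, fun T hT hST => ?_⟩
  · rintro _ ⟨k, rfl⟩
    exact ((h k).cle_iff hU).2 fun x _ => ae_of_all _ fun ω hω => mem_iUnion.2 ⟨k, hω⟩
  · obtain ⟨H, hH⟩ := hT.exists_isGraph
    refine (hU.cle_iff hH).2 fun x hx => ?_
    filter_upwards [ae_all_iff.2 fun k => ((h k).cle_iff hH).1 (hST _ ⟨k, rfl⟩) x hx] with ω hk hω
    obtain ⟨k, hω⟩ := mem_iUnion.1 hω
    exact hk k hω

theorem isGraph_cInf₂ (hX : Stable P X) (hG : IsGraph P X G S) (hH : IsGraph P X H T) :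
    IsGraph P X (G ∩ H) (cInf₂ P X S T) := by
  have hI := (hG.isLocal.inter hH.isLocal).isGraph_condOfGraph hX
  refine hI.cInf_of_isInfOf ⟨hI.isCond, ?_, fun R hR hRST => ?_⟩
  · rintro _ (rfl | rfl)
    · exact (hI.cle_iff hG).2 fun x _ => ae_of_all _ fun ω => And.left
    · exact (hI.cle_iff hH).2 fun x _ => ae_of_all _ fun ω => And.right
  · obtain ⟨K, hK⟩ := hR.exists_isGraph
    refine (hK.cle_iff hI).2 fun x hx => ?_
    filter_upwards [(hK.cle_iff hG).1 (hRST _ (.inl rfl)) x hx,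
      (hK.cle_iff hH).1 (hRST _ (.inr rfl)) x hx] with ω h₁ h₂ hω using ⟨h₁ hω, h₂ hω⟩

theorem cdisjoint_iff (hX : Stable P X) (hG : IsGraph P X G S) (hH : IsGraph P X H T) :
    cdisjoint P X S T ↔ ∀ x ∈ X, ∀ᵐ ω ∂P, (x, ω) ∈ G → (x, ω) ∉ H := by
  have hGH := isGraph_cInf₂ hX hG hH
  refine ⟨fun h x hx => ?_, fun h => (hGH.congr fun x hx => ?_).unique (isGraph_empty hX)⟩
  · filter_upwards [hGH.ae_iff_of_ceq (isGraph_empty hX) h x hx] with ω hω h₁ h₂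
    exact hω.1 ⟨h₁, h₂⟩
  · filter_upwards [h x hx] with ω hω
    exact ⟨False.elim, fun h => hω h.1 h.2⟩

theorem isGraph_ccompl (hX : Stable P X) (hG : IsGraph P X G S) :
    IsGraph P X Gᶜ (ccompl P X S) := by
  have hC := hG.isLocal.compl.isGraph_condOfGraph hX
  refine hC.cSup_of_isSupOf ⟨hC.isCond, fun T hT => ?_, fun T _ h => h _ ⟨hC.isCond, ?_⟩⟩
  · obtain ⟨H, hH⟩ := hT.1.exists_isGraph
    exact (hH.cle_iff hC).2 ((cdisjoint_iff hX hH hG).1 hT.2)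
  · exact (cdisjoint_iff hX hC hG).2 fun x _ => ae_of_all _ fun ω => id

theorem isGraph_condConcat (hX : Stable P X) (A : Partition mΩ P)
    {G : ℕ → Set ((Ω → E) × Ω)} {S : ℕ → CondRaw Ω E} (h : ∀ k, IsGraph P X (G k) (S k)) :
    IsGraph P X (⋃ k, G k ∩ Prod.snd ⁻¹' A.part k) (condConcat P A S) := by
  refine isGraph_of_memOver_iff (isCond_condConcat hX A fun k => (h k).isCond) (fun x hx => ?_)
    fun x hx C hC => ?_
  · rw [preimage_iUnion]
    exact .iUnion fun k => ((h k).nullMeasurableSet_slice hx).inter (A.meas k).nullMeasurableSet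
  · simp only [memOver_condConcat_iff, fun k => (h k).memOver_iff hx (hC.inter (A.meas k)),
      ← ae_all_iff]
    refine eventually_congr ?_
    filter_upwards [A.ae_mem_part_iff] with ω hA
    simp [hA]

theorem cInf₂_ceq_left_of_subset (hX : Stable P X) (hG : IsGraph P X G S) (hH : IsGraph P X H T)
    (hGH : G ⊆ H) : ceq P (cInf₂ P X S T) S :=
  (inter_eq_left.2 hGH ▸ isGraph_cInf₂ hX hG hH).unique hG

theorem cInf₂_ctop_ceq (hX : Stable P X) (hT : IsCond P X T) :
    ceq P (cInf₂ P X (ctop X) T) T := by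
  obtain ⟨H, hH⟩ := hT.exists_isGraph
  exact (univ_inter H ▸ isGraph_cInf₂ hX (isGraph_univ hX) hH).unique hH

theorem cInf₂_cle_left (hX : Stable P X) (hS : IsCond P X S) (hT : IsCond P X T) :
    cle P (cInf₂ P X S T) S := by
  obtain ⟨G, hG⟩ := hS.exists_isGraph
  obtain ⟨H, hH⟩ := hT.exists_isGraph
  exact ((isGraph_cInf₂ hX hG hH).cle_iff hG).2 fun _ _ => ae_of_all _ fun _ => And.left

theorem cInf₂_ceq_cInf₂_left (hX : Stable P X) (hS : IsCond P X S) (hT : IsCond P X T)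
    (hZ : IsCond P X Z) (h : ceq P S T) : ceq P (cInf₂ P X S Z) (cInf₂ P X T Z) := by
  obtain ⟨G, hG⟩ := hS.exists_isGraph
  obtain ⟨H, hH⟩ := hZ.exists_isGraph
  exact (isGraph_cInf₂ hX hG hH).unique (isGraph_cInf₂ hX (hG.of_ceq hT h) hH)

theorem cInf₂_condConcat_ceq (hX : Stable P X) (A : Partition mΩ P) {S : ℕ → CondRaw Ω E}
    (hS : ∀ k, IsCond P X (S k)) (hZ : IsCond P X Z) :
    ceq P (cInf₂ P X (condConcat P A S) Z) (condConcat P A fun k => cInf₂ P X (S k) Z) := by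
  choose G hG using fun k => (hS k).exists_isGraph
  obtain ⟨H, hH⟩ := hZ.exists_isGraph
  have h := isGraph_cInf₂ hX (isGraph_condConcat hX A hG) hH
  simp only [iUnion_inter, inter_right_comm _ _ H] at h
  exact h.unique (isGraph_condConcat hX A fun k => isGraph_cInf₂ hX (hG k) hH)

theorem cdisjoint_cInf₂_cInf₂ (hX : Stable P X) (hS : IsCond P X S) (hT : IsCond P X T)
    (hZ : IsCond P X Z) (h : cdisjoint P X S T) :
    cdisjoint P X (cInf₂ P X S Z) (cInf₂ P X T Z) := by
  obtain ⟨G, hG⟩ := hS.exists_isGraph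
  obtain ⟨H, hH⟩ := hT.exists_isGraph
  obtain ⟨K, hK⟩ := hZ.exists_isGraph
  refine (cdisjoint_iff hX (isGraph_cInf₂ hX hG hK) (isGraph_cInf₂ hX hH hK)).2 fun x hx => ?_
  filter_upwards [(cdisjoint_iff hX hG hH).1 h x hx] with ω hω h₁ h₂ using hω h₁.1 h₂.1

end Operations

section StableFamilies

variable {Ω E : Type*} {mΩ : MeasurableSpace Ω} {P : Measure Ω} {X : Set (Ω → E)}
  {S T : CondRaw Ω E} {G H : Set ((Ω → E) × Ω)} {𝒞 𝒟 ℰ 𝒳 : Set (CondRaw Ω E)}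

theorem IsStableDynkin.stable (h𝒟 : IsStableDynkin P X 𝒟) : Stable P X :=
  (h𝒟.1.2.1 _ h𝒟.2.1).1

theorem IsStableSigma.isStableDynkin (h𝒳 : IsStableSigma P X 𝒳) : IsStableDynkin P X 𝒳 :=
  ⟨h𝒳.1, h𝒳.2.1, h𝒳.2.2.1, fun S hS _ => h𝒳.2.2.2 S hS⟩

theorem subset_sigmaGen : ℰ ⊆ sigmaGen P X ℰ :=
  subset_sInter fun _ h => h.2

/-- The graphs of the members of a family of conditional sets. -/
def graphSystem (P : Measure Ω) (X : Set (Ω → E)) (𝒞 : Set (CondRaw Ω E)) :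
    Set (Set ((Ω → E) × Ω)) :=
  {G | ∃ S ∈ 𝒞, IsGraph P X G S}

variable [SFinite P]

theorem IsStableColl.mem_of_isGraph (h𝒞 : IsStableColl P X 𝒞) (hG : G ∈ graphSystem P X 𝒞)
    (hT : IsGraph P X G T) : T ∈ 𝒞 := by
  obtain ⟨S, hS, hSG⟩ := hG
  exact h𝒞.2.2.1 S hS T hT.isCond (hSG.unique hT)

theorem IsStableDynkin.univ_mem_graphSystem (h𝒟 : IsStableDynkin P X 𝒟) :
    univ ∈ graphSystem P X 𝒟 :=
  ⟨_, h𝒟.2.1, isGraph_univ h𝒟.stable⟩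

theorem IsStableDynkin.compl_mem_graphSystem (h𝒟 : IsStableDynkin P X 𝒟)
    (hG : G ∈ graphSystem P X 𝒟) : Gᶜ ∈ graphSystem P X 𝒟 := by
  obtain ⟨S, hS, hSG⟩ := hG
  exact ⟨_, h𝒟.2.2.1 S hS, isGraph_ccompl h𝒟.stable hSG⟩

theorem IsStableDynkin.empty_mem_graphSystem (h𝒟 : IsStableDynkin P X 𝒟) :
    ∅ ∈ graphSystem P X 𝒟 :=
  compl_univ ▸ h𝒟.compl_mem_graphSystem h𝒟.univ_mem_graphSystem

theorem IsStableDynkin.cbot_mem (h𝒟 : IsStableDynkin P X 𝒟) : cbot X ∈ 𝒟 :=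
  h𝒟.1.mem_of_isGraph h𝒟.empty_mem_graphSystem (isGraph_empty h𝒟.stable)

theorem cdisjoint_of_disjoint (hX : Stable P X) (hG : IsGraph P X G S) (hH : IsGraph P X H T)
    (h : Disjoint G H) : cdisjoint P X S T :=
  (cdisjoint_iff hX hG hH).2 fun _ _ => ae_of_all _ fun _ h₁ h₂ => disjoint_left.1 h h₁ h₂

theorem IsStableDynkin.iUnion_mem_graphSystem (h𝒟 : IsStableDynkin P X 𝒟)
    {G : ℕ → Set ((Ω → E) × Ω)} (hdisj : Pairwise (Function.onFun Disjoint G))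
    (hG : ∀ k, G k ∈ graphSystem P X 𝒟) : ⋃ k, G k ∈ graphSystem P X 𝒟 := by
  choose S hS hSG using hG
  refine ⟨_, h𝒟.2.2.2 S hS fun i j hij => ?_, isGraph_cSupFam h𝒟.stable hSG⟩
  exact cdisjoint_of_disjoint h𝒟.stable (hSG i) (hSG j) (hdisj hij)

theorem IsStableDynkin.inter_snd_mem_graphSystem (h𝒟 : IsStableDynkin P X 𝒟)
    (hG : G ∈ graphSystem P X 𝒟) {A : Set Ω} (hA : MeasurableSet A) :
    G ∩ Prod.snd ⁻¹' A ∈ graphSystem P X 𝒟 := by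
  classical
  obtain ⟨S, hS, hSG⟩ := hG
  have hf : Measurable (A.piecewise (fun _ => 0) (fun _ => 1) : Ω → ℕ) :=
    measurable_const.piecewise hA measurable_const
  let T : ℕ → CondRaw Ω E := fun k => Nat.casesOn k S fun _ => cbot X
  have hT : ∀ k, T k ∈ 𝒟 := by rintro (_ | _); exacts [hS, h𝒟.cbot_mem]
  have hTG : ∀ k, IsGraph P X (Nat.casesOn k G fun _ => ∅) (T k) := by
    rintro (_ | _); exacts [hSG, isGraph_empty h𝒟.stable]
  refine ⟨_, h𝒟.1.2.2.2 (.ofIndex P hf) T hT, ?_⟩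
  convert isGraph_condConcat h𝒟.stable (.ofIndex P hf) hTG using 1
  rw [← union_iUnion_nat_succ]
  ext ⟨x, ω⟩
  by_cases hω : ω ∈ A <;> simp [Partition.ofIndex, hω]

theorem isPiSystem_graphSystem (hX : Stable P X)
    (hπ : ∀ S ∈ ℰ, ∀ T ∈ ℰ, cInf₂ P X S T ∈ ℰ) : IsPiSystem (graphSystem P X ℰ) := by
  rintro G ⟨S, hS, hG⟩ H ⟨T, hT, hH⟩ -
  exact ⟨_, hπ S hS T hT, isGraph_cInf₂ hX hG hH⟩

/-- The intersections of cylinders `Prod.snd ⁻¹' A`, for measurable `A`, with graphs of members of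
`ℰ`, together with the cylinders themselves. Closing under cylinders is what countable
concatenation amounts to on the level of graphs. -/
def cylinderSystem (P : Measure Ω) (X : Set (Ω → E)) (ℰ : Set (CondRaw Ω E)) :
    Set (Set ((Ω → E) × Ω)) :=
  image2 (fun G A => G ∩ Prod.snd ⁻¹' A) (insert univ (graphSystem P X ℰ)) {A | MeasurableSet A}

theorem isPiSystem_cylinderSystem (hX : Stable P X)
    (hπ : ∀ S ∈ ℰ, ∀ T ∈ ℰ, cInf₂ P X S T ∈ ℰ) : IsPiSystem (cylinderSystem P X ℰ) := by
  rintro _ ⟨G, hG, A, hA, rfl⟩ _ ⟨H, hH, B, hB, rfl⟩ hne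
  refine ⟨G ∩ H, ?_, A ∩ B, hA.inter hB, inter_inter_inter_comm ..⟩
  exact (isPiSystem_graphSystem hX hπ).insert_univ G hG H hH
    (hne.mono (inter_subset_inter inter_subset_left inter_subset_left))

theorem IsStableDynkin.mem_graphSystem_of_measurableSet (h𝒟 : IsStableDynkin P X 𝒟)
    (hℰ : ℰ ⊆ 𝒟) (hπ : ∀ S ∈ ℰ, ∀ T ∈ ℰ, cInf₂ P X S T ∈ ℰ)
    (hG : MeasurableSet[.generateFrom (cylinderSystem P X ℰ)] G) : G ∈ graphSystem P X 𝒟 := by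
  induction G, hG using MeasurableSpace.induction_on_inter rfl
    (isPiSystem_cylinderSystem h𝒟.stable hπ) with
  | empty => exact h𝒟.empty_mem_graphSystem
  | basic G hG =>
    obtain ⟨H, rfl | ⟨S, hS, hSH⟩, A, hA, rfl⟩ := hG
    · exact h𝒟.inter_snd_mem_graphSystem h𝒟.univ_mem_graphSystem hA
    · exact h𝒟.inter_snd_mem_graphSystem ⟨S, hℰ hS, hSH⟩ hA
  | compl G _ hG => exact h𝒟.compl_mem_graphSystem hG
  | iUnion G hdisj _ hG => exact h𝒟.iUnion_mem_graphSystem hdisj hG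

theorem isStableSigma_setOf_measurableSet (hX : Stable P X) {m : MeasurableSpace ((Ω → E) × Ω)}
    (hm : Measurable[m] (Prod.snd : (Ω → E) × Ω → Ω)) :
    IsStableSigma P X {S | ∃ G, MeasurableSet[m] G ∧ IsGraph P X G S} := by
  have htop : ctop X ∈ {S | ∃ G, MeasurableSet[m] G ∧ IsGraph P X G S} :=
    ⟨univ, .univ, isGraph_univ hX⟩
  refine ⟨⟨⟨_, htop⟩, ?_, ?_, fun A S hS => ?_⟩, htop, ?_, fun S hS => ?_⟩
  · rintro S ⟨G, -, hG⟩
    exact hG.isCond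
  · rintro S ⟨G, hGm, hG⟩ T hT hST
    exact ⟨G, hGm, hG.of_ceq hT hST⟩
  · choose G hGm hG using hS
    exact ⟨_, .iUnion fun k => (hGm k).inter (hm (A.meas k)), isGraph_condConcat hX A hG⟩
  · rintro S ⟨G, hGm, hG⟩
    exact ⟨Gᶜ, hGm.compl, isGraph_ccompl hX hG⟩
  · choose G hGm hG using hS
    exact ⟨_, .iUnion hGm, isGraph_cSupFam hX hG⟩

theorem sigmaGen_subset_of_isStableDynkin (h𝒟 : IsStableDynkin P X 𝒟) (hℰ : ℰ ⊆ 𝒟)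
    (hπ : ∀ S ∈ ℰ, ∀ T ∈ ℰ, cInf₂ P X S T ∈ ℰ) : sigmaGen P X ℰ ⊆ 𝒟 := by
  have hsnd : Measurable[.generateFrom (cylinderSystem P X ℰ)]
      (Prod.snd : (Ω → E) × Ω → Ω) := fun A hA =>
    .basic _ ⟨univ, mem_insert _ _, A, hA, univ_inter _⟩
  have hℰ_mem : ℰ ⊆ {S | ∃ G, MeasurableSet[.generateFrom (cylinderSystem P X ℰ)] G ∧
      IsGraph P X G S} := fun S hS => by
    obtain ⟨G, hG⟩ := (h𝒟.1.2.1 S (hℰ hS)).exists_isGraph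
    exact ⟨G, .basic _ ⟨G, mem_insert_of_mem _ ⟨S, hS, hG⟩, univ, .univ, inter_univ _⟩, hG⟩
  intro S hS
  obtain ⟨G, hGm, hG⟩ := hS _ ⟨isStableSigma_setOf_measurableSet h𝒟.stable hsnd, hℰ_mem⟩
  exact h𝒟.1.mem_of_isGraph (h𝒟.mem_graphSystem_of_measurableSet hℰ hπ hGm) hG

/-- The σ-algebra of the graphs of members of a stable σ-algebra. -/
abbrev IsStableSigma.graphSpace (h𝒳 : IsStableSigma P X 𝒳) : MeasurableSpace ((Ω → E) × Ω) where
  MeasurableSet' G := G ∈ graphSystem P X 𝒳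
  measurableSet_empty := h𝒳.isStableDynkin.empty_mem_graphSystem
  measurableSet_compl _ := h𝒳.isStableDynkin.compl_mem_graphSystem
  measurableSet_iUnion G hG := by
    choose S hS hSG using hG
    exact ⟨_, h𝒳.2.2.2 S hS, isGraph_cSupFam h𝒳.isStableDynkin.stable hSG⟩

theorem IsStableSigma.cInf₂_mem (h𝒳 : IsStableSigma P X 𝒳) (hS : S ∈ 𝒳) (hT : T ∈ 𝒳) :
    cInf₂ P X S T ∈ 𝒳 := by
  obtain ⟨G, hG⟩ := (h𝒳.1.2.1 S hS).exists_isGraph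
  obtain ⟨H, hH⟩ := (h𝒳.1.2.1 T hT).exists_isGraph
  let _ : MeasurableSpace ((Ω → E) × Ω) := h𝒳.graphSpace
  have hG_meas : MeasurableSet G := ⟨S, hS, hG⟩
  have hH_meas : MeasurableSet H := ⟨T, hT, hH⟩
  exact h𝒳.1.mem_of_isGraph (hG_meas.inter hH_meas) (isGraph_cInf₂ h𝒳.isStableDynkin.stable hG hH)

end StableFamilies

section StableMeasures

variable {Ω E : Type*} {mΩ : MeasurableSpace Ω} {P : Measure Ω} {X : Set (Ω → E)}
  {S T Z : CondRaw Ω E} {ℰ 𝒳 : Set (CondRaw Ω E)} {μ ν : CondRaw Ω E → Ω → ℝ≥0∞}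

theorem IsStableMeasureOn.cbot_ae_eq (hμ : IsStableMeasureOn P X 𝒳 μ) (h : cbot X ∈ 𝒳) :
    μ (cbot X) =ᵐ[P] 0 := by
  filter_upwards [hμ.2.1 _ h] with ω hω
  rw [hω]
  exact indicator_of_notMem (notMem_empty ω) _

variable [SFinite P]

theorem IsStableMeasureOn.ae_eq_tsum (hμ : IsStableMeasureOn P X 𝒳 μ)
    (h𝒳 : IsStableSigma P X 𝒳) {S : ℕ → CondRaw Ω E} (hS : ∀ k, S k ∈ 𝒳)
    {G : ℕ → Set ((Ω → E) × Ω)} (hG : ∀ k, IsGraph P X (G k) (S k))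
    (hdisj : ∀ i j, i ≠ j → cdisjoint P X (S i) (S j)) (hT : IsGraph P X (⋃ k, G k) T) :
    μ T =ᵐ[P] fun ω => ∑' k, μ (S k) ω := by
  have hsup := h𝒳.2.2.2 S hS
  have hsup_graph := isGraph_cSupFam h𝒳.isStableDynkin.stable hG
  have hT_mem : T ∈ 𝒳 := h𝒳.1.mem_of_isGraph ⟨_, hsup, hsup_graph⟩ hT
  exact (hμ.1.2.1 T hT_mem _ hsup (hT.unique hsup_graph)).trans (hμ.2.2 S hS hdisj hsup)

theorem IsStableMeasureOn.add_ccompl_ae_eq (hμ : IsStableMeasureOn P X 𝒳 μ)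
    (h𝒳 : IsStableSigma P X 𝒳) (hS : S ∈ 𝒳) :
    (fun ω => μ S ω + μ (ccompl P X S) ω) =ᵐ[P] μ (ctop X) := by
  have hX := h𝒳.isStableDynkin.stable
  obtain ⟨G, hG⟩ := (h𝒳.1.2.1 S hS).exists_isGraph
  let R : ℕ → CondRaw Ω E := fun k => Nat.casesOn k S fun k => Nat.casesOn k (ccompl P X S)
    fun _ => cbot X
  let K : ℕ → Set ((Ω → E) × Ω) := fun k => Nat.casesOn k G fun k => Nat.casesOn k Gᶜ fun _ => ∅
  have hbot := h𝒳.isStableDynkin.cbot_mem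
  have hR : ∀ k, R k ∈ 𝒳 := by
    rintro (_ | _ | _); exacts [hS, h𝒳.2.2.1 S hS, hbot]
  have hK : ∀ k, IsGraph P X (K k) (R k) := by
    rintro (_ | _ | _); exacts [hG, isGraph_ccompl hX hG, isGraph_empty hX]
  have hK_disj : Pairwise (Function.onFun Disjoint K) := by
    rintro (_ | _ | _) (_ | _ | _) hij <;>
      simp [Function.onFun, K, disjoint_compl_right, disjoint_compl_left] at hij ⊢
  have hK_union : ⋃ k, K k = univ := by
    rw [← union_iUnion_nat_succ, ← union_iUnion_nat_succ]
    simp [K]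
  filter_upwards [hμ.cbot_ae_eq hbot, hμ.ae_eq_tsum h𝒳 hR hK
    (fun i j hij => cdisjoint_of_disjoint hX (hK i) (hK j) (hK_disj hij))
    (hK_union ▸ isGraph_univ hX)] with ω hω₀ hω
  have hR_zero : ∀ k ∉ Finset.range 2, μ (R k) ω = 0 := by
    rintro (_ | _ | k) hk
    · simp at hk
    · simp at hk
    · exact hω₀
  rw [hω, tsum_eq_sum hR_zero, Finset.sum_range_succ, Finset.sum_range_one]
  rfl

theorem IsStableMeasureOn.restrict (hμ : IsStableMeasureOn P X 𝒳 μ) (h𝒳 : IsStableSigma P X 𝒳)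
    (hZ : Z ∈ 𝒳) : IsStableMeasureOn P X 𝒳 fun S => μ (cInf₂ P X S Z) := by
  have hX := h𝒳.isStableDynkin.stable
  have hcond := h𝒳.1.2.1
  have hmem : ∀ S ∈ 𝒳, cInf₂ P X S Z ∈ 𝒳 := fun S hS => h𝒳.cInf₂_mem hS hZ
  refine ⟨⟨fun S hS => hμ.1.1 _ (hmem S hS), fun S hS T hT hST => ?_, fun A S hS => ?_⟩,
    fun S hS => ?_, fun S hS hdisj _ => ?_⟩
  · exact hμ.1.2.1 _ (hmem S hS) _ (hmem T hT)
      (cInf₂_ceq_cInf₂_left hX (hcond S hS) (hcond T hT) (hcond Z hZ) hST)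
  · have hceq := cInf₂_condConcat_ceq hX A (fun k => hcond (S k) (hS k)) (hcond Z hZ)
    exact (hμ.1.2.1 _ (hmem _ (h𝒳.1.2.2.2 A S hS)) _
      (h𝒳.1.2.2.2 A _ fun k => hmem _ (hS k)) hceq).trans (hμ.1.2.2 A _ fun k => hmem _ (hS k))
  · filter_upwards [hμ.2.1 _ (hmem S hS),
      ae_le_set.2 (cInf₂_cle_left hX (hcond S hS) (hcond Z hZ)).1] with ω h₁ h₂
    by_cases hω : ω ∈ S.2
    · rw [indicator_of_mem hω]
    · rw [indicator_of_notMem hω, h₁, indicator_of_notMem fun h => hω (h₂ h)]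
  · obtain ⟨H, hH⟩ := (hcond Z hZ).exists_isGraph
    choose G hG using fun k => (hcond (S k) (hS k)).exists_isGraph
    exact hμ.ae_eq_tsum h𝒳 (fun k => hmem _ (hS k)) (fun k => isGraph_cInf₂ hX (hG k) hH)
      (fun i j hij => cdisjoint_cInf₂_cInf₂ hX (hcond _ (hS i)) (hcond _ (hS j)) (hcond Z hZ)
        (hdisj i j hij))
      (iUnion_inter H G ▸ isGraph_cInf₂ hX (isGraph_cSupFam hX hG) hH)

theorem isStableDynkin_setOf_ae_eq (h𝒳 : IsStableSigma P X 𝒳)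
    (hμ : IsFiniteStableMeasureOn P X 𝒳 μ) (hν : IsStableMeasureOn P X 𝒳 ν)
    (htop : μ (ctop X) =ᵐ[P] ν (ctop X)) : IsStableDynkin P X {S ∈ 𝒳 | μ S =ᵐ[P] ν S} := by
  refine ⟨⟨⟨_, h𝒳.2.1, htop⟩, fun S hS => h𝒳.1.2.1 S hS.1, fun S hS T hT hST => ?_,
    fun A S hS => ?_⟩, ⟨h𝒳.2.1, htop⟩, fun S hS => ⟨h𝒳.2.2.1 S hS.1, ?_⟩, fun S hS hdisj => ?_⟩
  · have hT' := h𝒳.1.2.2.1 S hS.1 T hT hST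
    exact ⟨hT', (hμ.1.1.2.1 S hS.1 T hT' hST).symm.trans
      (hS.2.trans (hν.1.2.1 S hS.1 T hT' hST))⟩
  · refine ⟨h𝒳.1.2.2.2 A S fun k => (hS k).1, ?_⟩
    filter_upwards [hμ.1.1.2.2 A S fun k => (hS k).1, hν.1.2.2 A S fun k => (hS k).1,
      ae_all_iff.2 fun k => (hS k).2] with ω h₁ h₂ h₃
    rw [h₁, h₂, A.concat_apply, A.concat_apply, h₃]
  · filter_upwards [hμ.1.add_ccompl_ae_eq h𝒳 hS.1, hν.add_ccompl_ae_eq h𝒳 hS.1, hS.2, htop, hμ.2]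
      with ω h₁ h₂ h₃ h₄ hfin
    have hfinS : μ S ω ≠ ∞ := (le_self_add.trans_lt (h₁.trans_lt hfin)).ne
    rw [← ENNReal.add_right_inj hfinS, h₁, h₄, ← h₂, h₃]
  · have hsup := h𝒳.2.2.2 S fun k => (hS k).1
    refine ⟨hsup, ?_⟩
    filter_upwards [hμ.1.2.2 S (fun k => (hS k).1) hdisj hsup,
      hν.2.2 S (fun k => (hS k).1) hdisj hsup, ae_all_iff.2 fun k => (hS k).2] with ω h₁ h₂ h₃
    rw [h₁, h₂, tsum_congr h₃]

theorem IsFiniteStableMeasureOn.ae_eq_of_sigmaGen (hμ : IsFiniteStableMeasureOn P X 𝒳 μ)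
    (hν : IsStableMeasureOn P X 𝒳 ν) (h𝒳 : IsStableSigma P X 𝒳) (hgen : sigmaGen P X ℰ = 𝒳)
    (hπ : ∀ S ∈ ℰ, ∀ T ∈ ℰ, cInf₂ P X S T ∈ ℰ) (htop : μ (ctop X) =ᵐ[P] ν (ctop X))
    (hagree : ∀ S ∈ ℰ, μ S =ᵐ[P] ν S) : ∀ S ∈ 𝒳, μ S =ᵐ[P] ν S := fun _ hS =>
  (sigmaGen_subset_of_isStableDynkin (isStableDynkin_setOf_ae_eq h𝒳 hμ hν htop)
    (fun T hT => ⟨hgen ▸ subset_sigmaGen hT, hagree T hT⟩) hπ (hgen ▸ hS)).2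

theorem IsStableMeasureOn.ae_eq_of_restrict_ae_eq (hμ : IsStableMeasureOn P X 𝒳 μ)
    (hν : IsStableMeasureOn P X 𝒳 ν) (h𝒳 : IsStableSigma P X 𝒳) {Z : ℕ → CondRaw Ω E}
    (hZ : ∀ k, Z k ∈ 𝒳) (hZsup : ceq P (cSupFam P X Z) (ctop X))
    (h : ∀ k, ∀ S ∈ 𝒳, μ (cInf₂ P X S (Z k)) =ᵐ[P] ν (cInf₂ P X S (Z k))) :
    ∀ S ∈ 𝒳, μ S =ᵐ[P] ν S := by
  intro S hS
  have hX := h𝒳.isStableDynkin.stable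
  obtain ⟨G, hG⟩ := (h𝒳.1.2.1 S hS).exists_isGraph
  choose H hH using fun k => (h𝒳.1.2.1 (Z k) (hZ k)).exists_isGraph
  let K : ℕ → Set ((Ω → E) × Ω) := fun k => G ∩ disjointed H k
  let _ : MeasurableSpace ((Ω → E) × Ω) := h𝒳.graphSpace
  have hG_meas : MeasurableSet G := ⟨S, hS, hG⟩
  have hH_meas : ∀ k, MeasurableSet (H k) := fun k => ⟨Z k, hZ k, hH k⟩
  choose T hT hTK using fun k => hG_meas.inter (.disjointed hH_meas k)
  have hT_eq : ∀ k, μ (T k) =ᵐ[P] ν (T k) := fun k => by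
    have hceq := cInf₂_ceq_left_of_subset hX (hTK k) (hH k)
      (inter_subset_right.trans (disjointed_subset H k))
    have hmem := h𝒳.cInf₂_mem (hT k) (hZ k)
    exact (hμ.1.2.1 _ hmem _ (hT k) hceq).symm.trans
      ((h k _ (hT k)).trans (hν.1.2.1 _ hmem _ (hT k) hceq))
  have hT_disj : ∀ i j, i ≠ j → cdisjoint P X (T i) (T j) := fun i j hij =>
    cdisjoint_of_disjoint hX (hTK i) (hTK j)
      ((disjoint_disjointed H hij).mono inter_subset_right inter_subset_right)
  have hS_graph : IsGraph P X (⋃ k, K k) S := by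
    rw [← inter_iUnion, iUnion_disjointed]
    refine hG.congr fun x hx => ?_
    filter_upwards [(isGraph_cSupFam hX hH).ae_iff_of_ceq (isGraph_univ hX) hZsup x hx] with ω hω
    exact and_iff_left (hω.2 trivial)
  filter_upwards [hμ.ae_eq_tsum h𝒳 hT hTK hT_disj hS_graph,
    hν.ae_eq_tsum h𝒳 hT hTK hT_disj hS_graph, ae_all_iff.2 hT_eq] with ω h₁ h₂ h₃
  rw [h₁, h₂, tsum_congr h₃]

theorem IsStableMeasureOn.restrict_ctop_ae_eq (hμ : IsStableMeasureOn P X 𝒳 μ)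
    (h𝒳 : IsStableSigma P X 𝒳) (hZ : Z ∈ 𝒳) : μ (cInf₂ P X (ctop X) Z) =ᵐ[P] μ Z :=
  hμ.1.2.1 _ (h𝒳.cInf₂_mem h𝒳.2.1 hZ) _ hZ
    (cInf₂_ctop_ceq h𝒳.isStableDynkin.stable (h𝒳.1.2.1 Z hZ))

end StableMeasures

theorem stable_measure_uniqueness_general
    {Ω E : Type*} {mΩ : MeasurableSpace Ω} (P : Measure Ω) [SFinite P]
    (X : Set (Ω → E)) (𝒳 : Set (CondRaw Ω E)) (hsig : IsStableSigma P X 𝒳)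
    (ℰ : Set (CondRaw Ω E)) (hgen : sigmaGen P X ℰ = 𝒳)
    (hπ : ∀ S ∈ ℰ, ∀ T ∈ ℰ, cInf₂ P X S T ∈ ℰ)
    (μ ν : CondRaw Ω E → Ω → ℝ≥0∞)
    (hμ : IsStableMeasureOn P X 𝒳 μ) (hν : IsStableMeasureOn P X 𝒳 ν)
    (hagree : ∀ S ∈ ℰ, μ S =ᵐ[P] ν S)
    (Z : ℕ → CondRaw Ω E) (hZ : ∀ k, Z k ∈ ℰ)
    (hZsup : ceq P (cSupFam P X Z) (ctop X))
    (hZfin : ∀ k, ∀ᵐ ω ∂P, μ (Z k) ω < ∞) :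
    ∀ S ∈ 𝒳, μ S =ᵐ[P] ν S := by
  have hZ_mem : ∀ k, Z k ∈ 𝒳 := fun k => hgen ▸ subset_sigmaGen (hZ k)
  refine hμ.ae_eq_of_restrict_ae_eq hν hsig hZ_mem hZsup fun k => ?_
  have hμtop := hμ.restrict_ctop_ae_eq hsig (hZ_mem k)
  have hνtop := hν.restrict_ctop_ae_eq hsig (hZ_mem k)
  have hfin : IsFiniteStableMeasureOn P X 𝒳 fun S => μ (cInf₂ P X S (Z k)) :=
    ⟨hμ.restrict hsig (hZ_mem k), by filter_upwards [hμtop, hZfin k] with ω h₁ h₂ using h₁ ▸ h₂⟩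
  exact hfin.ae_eq_of_sigmaGen (hν.restrict hsig (hZ_mem k)) hsig hgen hπ
    (hμtop.trans ((hagree _ (hZ k)).trans hνtop.symm)) fun S hS => hagree _ (hπ S hS _ (hZ k))

/-- **Proposition 3.12 (uniqueness of the extension).**  Two stable measures on a
stable measurable space `(X, 𝒳)` which agree on a generating stable collection `ℰ`
closed under finite conditional intersections, and which agree and are finite on
some sequence in `ℰ` whose conditional union is `X`, are equal. -/
theorem stable_measure_uniqueness
    {Ω E : Type*} {mΩ : MeasurableSpace Ω} (P : @Measure Ω mΩ)
    [IsProbabilityMeasure P] (X : Set (Ω → E)) (hX : Stable P X)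
    (𝒳 : Set (CondRaw Ω E)) (hsig : IsStableSigma P X 𝒳)
    (ℰ : Set (CondRaw Ω E)) (hℰ : IsStableColl P X ℰ)
    (hgen : sigmaGen P X ℰ = 𝒳)
    (hπ : ∀ S ∈ ℰ, ∀ T ∈ ℰ, cInf₂ P X S T ∈ ℰ)
    (μ ν : CondRaw Ω E → Ω → ℝ≥0∞)
    (hμ : IsStableMeasureOn P X 𝒳 μ) (hν : IsStableMeasureOn P X 𝒳 ν)
    (hagree : ∀ S ∈ ℰ, μ S =ᵐ[P] ν S)
    (Z : ℕ → CondRaw Ω E) (hZ : ∀ k, Z k ∈ ℰ)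
    (hZsup : ceq P (cSupFam P X Z) (ctop X))
    (hZeq : ∀ k, μ (Z k) =ᵐ[P] ν (Z k))
    (hZfin : ∀ k, ∀ᵐ ω ∂P, μ (Z k) ω < ∞) :
    ∀ S ∈ 𝒳, μ S =ᵐ[P] ν S :=
  stable_measure_uniqueness_general P X 𝒳 hsig ℰ hgen hπ μ ν hμ hν hagree Z hZ hZsup hZfin

end CondMT
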